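/- arXiv:math/0606374 — 12 statements merged into one kernel-verified Lean document; each statement's English description precedes it below -/
import Mathlib

section
/- Let Q : F₂^m → F₂^n be a quadratic map with associated bilinear map B and associated quadratic polynomials q₁,…,q_n ∈ F₂[x₁,…,x_m]. Then Q is Bockstein closed (i.e., β(q_k) lies in the ideal (q₁,…,q_n) for every k) if and only if there exists an F₂-bilinear map P : F₂^n × F₂^m → F₂^n satisfying P(Q(x), y) = B(x,y) + P(B(x,y), x) for all x, y ∈ F₂^m. -/
open MvPolynomial

/-- The polarization (associated bilinear map) of a map `Q`:
`B(x,y) = Q(x+y) + Q(x) + Q(y)`. -/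
def qpolar {W V : Type*} [Add W] [Add V] (Q : W → V) (x y : W) : V :=
  Q (x + y) + Q x + Q y

/-- `Q` is a quadratic map between `F₂`-vector spaces: its polarization is `F₂`-bilinear. -/
def IsQuadraticMap {W V : Type*} [AddCommGroup W] [Module (ZMod 2) W]
    [AddCommGroup V] [Module (ZMod 2) V] (Q : W → V) : Prop :=
  (∀ x y z : W, qpolar Q (x + y) z = qpolar Q x z + qpolar Q y z) ∧
  (∀ x y z : W, qpolar Q x (y + z) = qpolar Q x y + qpolar Q x z)

/-- The Bockstein operator: the unique `F₂`-derivation of `F₂[x₁,…,x_m]`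
with `β(x_i) = x_i²`, given by `β(f) = Σ_i x_i² ∂f/∂x_i`. -/
noncomputable def bockstein {m : ℕ} (f : MvPolynomial (Fin m) (ZMod 2)) :
    MvPolynomial (Fin m) (ZMod 2) :=
  ∑ i : Fin m, X i ^ 2 * pderiv i f

/-- The quadratic polynomials associated to a quadratic map `Q : F₂^m → F₂^n`:
`q_k = Σ_i Q_k(e_i) x_i² + Σ_{i<j} B_k(e_i,e_j) x_i x_j`. -/
noncomputable def assocPoly {m n : ℕ} (Q : (Fin m → ZMod 2) → (Fin n → ZMod 2)) (k : Fin n) :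
    MvPolynomial (Fin m) (ZMod 2) :=
  (∑ i : Fin m, C (Q (Pi.single i 1) k) * X i ^ 2) +
  ∑ i : Fin m, ∑ j : Fin m,
    if i < j then C (qpolar Q (Pi.single i 1) (Pi.single j 1) k) * X i * X j else 0


section BocksteinAux

variable {m n : ℕ}

/-- Bockstein as a derivation. -/
noncomputable def bockDer (m : ℕ) : Derivation (ZMod 2) (MvPolynomial (Fin m) (ZMod 2))
    (MvPolynomial (Fin m) (ZMod 2)) := mkDerivation (ZMod 2) (fun i => X i ^ 2)

lemma bockstein_eq (f : MvPolynomial (Fin m) (ZMod 2)) : bockstein f = bockDer m f := by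
  have hs : ∀ g, (∑ i : Fin m, (X i ^ 2 : MvPolynomial (Fin m) (ZMod 2)) • pderiv (R := ZMod 2) i) g
      = ∑ i : Fin m, X i ^ 2 * pderiv i g := by
    intro g
    have := congrFun (map_sum Derivation.coeFnAddMonoidHom
      (fun i : Fin m => (X i ^ 2 : MvPolynomial (Fin m) (ZMod 2)) • pderiv (R := ZMod 2) i)
      Finset.univ) g
    rw [Finset.sum_apply] at this
    exact this
  have h : (∑ i : Fin m, (X i ^ 2 : MvPolynomial (Fin m) (ZMod 2)) • pderiv i) = bockDer m := by
    apply MvPolynomial.derivation_ext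
    intro i
    rw [hs]
    simp only [bockDer, mkDerivation_X, pderiv_X]
    rw [Finset.sum_eq_single i]
    · simp
    · intro j _ hj
      simp [hj.symm]
    · simp
  rw [← h, hs, bockstein]

lemma two_eq (p : MvPolynomial (Fin m) (ZMod 2)) : p + p = 0 := CharTwo.add_self_eq_zero p

lemma bockstein_assoc (Q : (Fin m → ZMod 2) → (Fin n → ZMod 2)) (k : Fin n) :
    bockstein (assocPoly Q k) = ∑ i : Fin m, ∑ j : Fin m,
      if i < j then C (qpolar Q (Pi.single i 1) (Pi.single j 1) k) *
        (X i ^ 2 * X j + X i * X j ^ 2) else 0 := by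
  rw [bockstein_eq, assocPoly, map_add, map_sum, map_sum]
  have h1 : ∀ i : Fin m, bockDer m (C (Q (Pi.single i 1) k) * X i ^ 2) = 0 := by
    intro i
    rw [← smul_eq_C_mul, Derivation.map_smul, pow_two, Derivation.leibniz, two_eq, smul_zero]
  simp only [h1, Finset.sum_const_zero, zero_add, map_sum]
  refine Finset.sum_congr rfl fun i _ => Finset.sum_congr rfl fun j _ => ?_
  split_ifs
  · rw [mul_assoc, ← smul_eq_C_mul, Derivation.map_smul, Derivation.leibniz, smul_eq_C_mul]
    simp only [bockDer, mkDerivation_X, smul_eq_mul]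
    ring
  · simp

variable {Q : (Fin m → ZMod 2) → (Fin n → ZMod 2)}

lemma add_self_vec (v : Fin n → ZMod 2) : v + v = 0 := by
  ext i; exact CharTwo.add_self_eq_zero _

lemma Q_zero (hQ : IsQuadraticMap Q) : Q 0 = 0 := by
  have h := hQ.1 0 0 0
  simp only [qpolar, add_zero, add_self_vec, zero_add] at h
  exact h

lemma qpolar_self (hQ : IsQuadraticMap Q) (x) : qpolar Q x x = 0 := by
  simp [qpolar, add_self_vec, Q_zero hQ, add_assoc]

lemma qpolar_symm (x y) : qpolar Q x y = qpolar Q y x := by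
  simp only [qpolar, add_comm x y]; abel

/-- polarization as bilinear map -/
noncomputable def bil (hQ : IsQuadraticMap Q) :
    (Fin m → ZMod 2) →ₗ[ZMod 2] (Fin m → ZMod 2) →ₗ[ZMod 2] (Fin n → ZMod 2) :=
  AddMonoidHom.toZModLinearMap 2
    (AddMonoidHom.mk' (fun x => AddMonoidHom.toZModLinearMap 2
      (AddMonoidHom.mk' (fun y => qpolar Q x y) (hQ.2 x)))
      (fun x y => LinearMap.ext fun z => hQ.1 x y z))

lemma bil_apply (hQ : IsQuadraticMap Q) (x y) : bil hQ x y = qpolar Q x y := rfl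

lemma vec_sum (x : Fin m → ZMod 2) : x = ∑ i, x i • (Pi.single i 1 : Fin m → ZMod 2) := by
  exact (pi_eq_sum_univ' x).trans (by simp [Pi.single, Function.update, funext_iff, eq_comm])

lemma sum_lt_symm {M : Type*} [AddCommMonoid M] (f : Fin m → Fin m → M) (h : ∀ i, f i i = 0) :
    ∑ i, ∑ j, f i j = ∑ i, ∑ j, if i < j then f i j + f j i else 0 := by
  have : ∀ i j, (if i < j then f i j + f j i else 0)
      = (if i < j then f i j else 0) + (if i < j then f j i else 0) := by
    intro i j; split_ifs <;> simp
  simp only [this, Finset.sum_add_distrib]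
  rw [Finset.sum_comm (f := fun i j => if i < j then f j i else 0)]
  simp only [← Finset.sum_add_distrib]
  refine Finset.sum_congr rfl fun i _ => Finset.sum_congr rfl fun j _ => ?_
  rcases lt_trichotomy i j with hh | hh | hh
  · simp [hh, hh.not_gt]
  · subst hh; simp [h]
  · simp [hh, hh.not_gt]

lemma qpolar_expand (hQ : IsQuadraticMap Q) (x y) (k : Fin n) :
    qpolar Q x y k = ∑ i, ∑ j, if i < j then
      qpolar Q (Pi.single i 1) (Pi.single j 1) k * (x i * y j + y i * x j) else 0 := by
  have h : qpolar Q x y k = ∑ i, ∑ j,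
      qpolar Q (Pi.single i 1) (Pi.single j 1) k * (x i * y j) := by
    rw [← bil_apply hQ]
    conv_lhs => rw [vec_sum x, vec_sum y]
    simp only [map_sum, map_smul, LinearMap.sum_apply, LinearMap.smul_apply, Finset.sum_apply,
      Pi.smul_apply, smul_eq_mul, bil_apply, Finset.mul_sum]
    refine Finset.sum_comm.trans ?_ 
    refine Finset.sum_congr rfl fun i _ => Finset.sum_congr rfl fun j _ => ?_
    ring
  rw [h, sum_lt_symm]
  · refine Finset.sum_congr rfl fun i _ => Finset.sum_congr rfl fun j _ => ?_
    rw [qpolar_symm (Pi.single j 1) (Pi.single i 1)]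
    split_ifs
    · ring
    · rfl
  · intro i; simp [qpolar_self hQ]

lemma eval_assoc (hQ : IsQuadraticMap Q) (x) (k : Fin n) :
    eval x (assocPoly Q k) = Q x k := by
  have hadd : ∀ x y, eval (x + y) (assocPoly Q k) =
      eval x (assocPoly Q k) + eval y (assocPoly Q k) + qpolar Q x y k := by
    intro x y
    rw [qpolar_expand hQ]
    simp only [assocPoly, map_add, map_sum, apply_ite (eval _), map_mul, map_pow, eval_C, eval_X,
      map_zero, Pi.add_apply, CharTwo.add_sq, mul_add, Finset.sum_add_distrib]
    rw [show ∀ a b c d e f : ZMod 2, a + b + c = (a + d) + (b + e) + f ↔ c = d + e + f by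
      intros; constructor <;> intro h <;> linear_combination h]
    simp only [← Finset.sum_add_distrib]
    refine Finset.sum_congr rfl fun i _ => Finset.sum_congr rfl fun j _ => ?_
    split_ifs
    · ring
    · simp
  let f : (Fin m → ZMod 2) →+ ZMod 2 :=
    AddMonoidHom.mk' (fun x => eval x (assocPoly Q k) + Q x k) (by
      intro x y
      have h2 : qpolar Q x y k = Q (x + y) k + Q x k + Q y k := rfl
      have h := hadd x y
      rw [h2] at h
      rw [h]
      linear_combination CharTwo.add_self_eq_zero (Q (x+y) k))
  have hf : AddMonoidHom.toZModLinearMap 2 f = 0 := by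
    apply LinearMap.pi_ext'
    intro i
    ext
    change eval (Pi.single i 1) (assocPoly Q k) + Q (Pi.single i 1) k = 0
    have : eval (Pi.single i 1) (assocPoly Q k) = Q (Pi.single i 1) k := by
      simp only [assocPoly, map_add, map_sum, apply_ite (eval _), map_mul, map_pow, eval_C, eval_X,
        map_zero]
      rw [Finset.sum_eq_single i, Finset.sum_eq_zero]
      · simp
      · intro a _
        apply Finset.sum_eq_zero
        intro b _
        split_ifs with hab
        · rcases eq_or_ne a i with rfl | h
          · simp [hab.ne']
          · simp [h]
        · rfl
      · intro j _ hj; simp [hj]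
      · simp
    rw [this, CharTwo.add_self_eq_zero]
  have := LinearMap.congr_fun hf x
  change eval x (assocPoly Q k) + Q x k = 0 at this
  exact CharTwo.add_eq_zero.mp this

/-- directional derivative at a point -/
noncomputable def dirDer (y : Fin m → ZMod 2) :
    Derivation (ZMod 2) (MvPolynomial (Fin m) (ZMod 2)) (MvPolynomial (Fin m) (ZMod 2)) :=
  mkDerivation (ZMod 2) (fun i => C (y i))

lemma dirDer_C (y : Fin m → ZMod 2) (a : ZMod 2) (p) : dirDer y (C a * p) = C a * dirDer y p := by
  rw [← smul_eq_C_mul, Derivation.map_smul, smul_eq_C_mul]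

lemma dirDer_sq (y : Fin m → ZMod 2) (p) : dirDer y (p ^ 2) = 0 := by
  rw [pow_two, Derivation.leibniz, two_eq]

lemma dirDer_X (y : Fin m → ZMod 2) (i) : dirDer y (X i) = C (y i) := mkDerivation_X _ _ _

lemma dirDer_assoc (hQ : IsQuadraticMap Q) (x y) (k : Fin n) :
    eval x (dirDer y (assocPoly Q k)) = qpolar Q x y k := by
  rw [qpolar_expand hQ]
  simp only [assocPoly, map_add, map_sum, mul_assoc, dirDer_C, dirDer_sq, mul_zero,
    Finset.sum_const_zero, map_zero, zero_add]
  refine Finset.sum_congr rfl fun i _ => Finset.sum_congr rfl fun j _ => ?_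
  split_ifs
  · rw [dirDer_C, Derivation.leibniz]
    simp only [dirDer_X, smul_eq_mul, map_add, map_mul, eval_C, eval_X]
    ring
  · simp

lemma zmod2_sq (a : ZMod 2) : a ^ 2 = a := by revert a; decide

lemma dirDer_bock (hQ : IsQuadraticMap Q) (x y) (k : Fin n) :
    eval x (dirDer y (bockstein (assocPoly Q k))) = qpolar Q x y k := by
  rw [qpolar_expand hQ, bockstein_assoc]
  simp only [map_sum]
  refine Finset.sum_congr rfl fun i _ => Finset.sum_congr rfl fun j _ => ?_
  split_ifs
  · rw [dirDer_C, map_add, Derivation.leibniz, Derivation.leibniz, dirDer_sq, dirDer_sq]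
    simp only [dirDer_X, smul_eq_mul, map_add, map_mul, eval_C, eval_X, map_pow, zmod2_sq,
      mul_zero, map_zero]
    ring
  · simp

/-- scaling homomorphism `X i ↦ s X i` -/
noncomputable def scaleHom (m : ℕ) : MvPolynomial (Fin m) (ZMod 2) →ₐ[ZMod 2]
    Polynomial (MvPolynomial (Fin m) (ZMod 2)) :=
  aeval (fun i => Polynomial.X * Polynomial.C (X i))

lemma scale_C (a : ZMod 2) : scaleHom m (C a) = Polynomial.C (C a) := by
  simp [scaleHom]

lemma scale_X (i) : scaleHom m (X i) = Polynomial.X * Polynomial.C (X i) := by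
  simp [scaleHom]

lemma scale_coeff_zero (p : MvPolynomial (Fin m) (ZMod 2)) :
    (scaleHom m p).coeff 0 = C (eval 0 p) := by
  induction p using MvPolynomial.induction_on with
  | C a => simp [scale_C]
  | add p q hp hq => simp [hp, hq]
  | mul_X p i hp => simp [scale_X, Polynomial.mul_coeff_zero]

lemma scale_coeff_one (p : MvPolynomial (Fin m) (ZMod 2)) :
    (scaleHom m p).coeff 1 = ∑ j, C (eval 0 (pderiv j p)) * X j := by
  induction p using MvPolynomial.induction_on with
  | C a => simp [scale_C, Polynomial.coeff_C]
  | add p q hp hq => simp [hp, hq, add_mul, Finset.sum_add_distrib]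
  | mul_X p i hp =>
    rw [map_mul, scale_X, ← mul_assoc, Polynomial.coeff_mul_C, Polynomial.coeff_mul_X,
      scale_coeff_zero]
    rw [Finset.sum_eq_single i]
    · simp [Derivation.leibniz]
    · intro j _ hj
      simp [Derivation.leibniz, pderiv_X, hj, hj.symm, Pi.single_apply]
    · simp

lemma scale_assoc (k : Fin n) :
    scaleHom m (assocPoly Q k) = Polynomial.C (assocPoly Q k) * Polynomial.X ^ 2 := by
  simp only [assocPoly, map_add, map_sum, add_mul, Finset.sum_mul]
  congr 1
  · refine Finset.sum_congr rfl fun i _ => ?_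
    simp only [map_mul, map_pow, scale_C, scale_X]; ring
  · refine Finset.sum_congr rfl fun i _ => Finset.sum_congr rfl fun j _ => ?_
    split_ifs
    · simp only [map_mul, scale_C, scale_X]; ring
    · simp

lemma scale_bock (k : Fin n) : scaleHom m (bockstein (assocPoly Q k)) =
    Polynomial.C (bockstein (assocPoly Q k)) * Polynomial.X ^ 3 := by
  simp only [bockstein_assoc, map_sum, Finset.sum_mul]
  refine Finset.sum_congr rfl fun i _ => Finset.sum_congr rfl fun j _ => ?_
  split_ifs
  · simp only [map_mul, map_add, map_pow, scale_C, scale_X]; ring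
  · simp

lemma exists_linear (k : Fin n)
    (h : bockstein (assocPoly Q k) ∈ Ideal.span (Set.range (assocPoly Q))) :
    ∃ a : Fin n → Fin m → ZMod 2,
      bockstein (assocPoly Q k) = ∑ l, (∑ j, C (a l j) * X j) * assocPoly Q l := by
  obtain ⟨c, hc⟩ := (Ideal.mem_span_range_iff_exists_fun).1 h
  refine ⟨fun l j => eval 0 (pderiv j (c l)), ?_⟩
  have h1 := congrArg (fun p => (scaleHom m p).coeff 3) hc
  simp only [scale_bock, map_sum, map_mul, scale_assoc, Polynomial.finsetSum_coeff] at h1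
  rw [Polynomial.coeff_C_mul_X_pow, if_pos rfl] at h1
  rw [← h1]
  refine Finset.sum_congr rfl fun l _ => ?_
  rw [← mul_assoc, show 3 = 1 + 2 from rfl, Polynomial.coeff_mul_X_pow, Polynomial.coeff_mul_C,
    scale_coeff_one]

lemma triple_sum (T : Fin m → Fin m → Fin m → MvPolynomial (Fin m) (ZMod 2))
    (hs : ∀ i j k, T i j k = T j i k) (h0 : ∀ i k, T i i k = 0)
    (hc : ∀ i j k, T i j k + T i k j + T j k i = 0) :
    ∑ i, ∑ j, ∑ k, (if i < j then T i j k else 0) = ∑ i, ∑ k, T i k i := by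
  have hsplit : ∀ i j k, (if i < j then T i j k else 0) =
      (if k = i then (if i < j then T i j k else 0) else 0) +
      (if k = j then (if i < j then T i j k else 0) else 0) +
      ((if k < i ∧ i < j then T i j k else 0) + (if i < k ∧ k < j then T i j k else 0) +
      (if i < j ∧ j < k then T i j k else 0)) := by
    intro i j k
    by_cases hij : i < j
    · rcases lt_trichotomy k i with h | h | h
      · have : k < j := h.trans hij
        simp [hij, h, h.ne, this.ne, h.not_gt, this.not_gt]
      · subst h; simp [hij, hij.ne, hij.not_gt]
      · rcases lt_trichotomy k j with h' | h' | h'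
        · simp [hij, h, h', h.ne', h'.ne, h.not_gt, h'.not_gt]
        · subst h'; simp [h, h.ne', h.not_gt]
        · simp [hij, h.ne', h'.ne', h.not_gt, h'.not_gt, h']
    · have : ¬ (i < k ∧ k < j) := fun h => hij (h.1.trans h.2)
      simp [hij, this]
  have e1 : ∑ i, ∑ j, ∑ k, (if k < i ∧ i < j then T i j k else 0) =
      ∑ a, ∑ b, ∑ c, (if a < b ∧ b < c then T b c a else 0) := by
    have h1 : ∀ i, ∑ j, ∑ k, (if k < i ∧ i < j then T i j k else 0) =
      ∑ k, ∑ j, (if k < i ∧ i < j then T i j k else 0) := fun i => Finset.sum_comm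
    simp only [h1]
    exact Finset.sum_comm
  have e2 : ∑ i, ∑ j, ∑ k, (if i < k ∧ k < j then T i j k else 0) =
      ∑ a, ∑ b, ∑ c, (if a < b ∧ b < c then T a c b else 0) :=
    Finset.sum_congr rfl fun i _ => Finset.sum_comm
  have e3 : ∑ a, ∑ b, ∑ c, (if a < b ∧ b < c then T b c a else 0) +
      ∑ a, ∑ b, ∑ c, (if a < b ∧ b < c then T a c b else 0) +
      ∑ a, ∑ b, ∑ c, (if a < b ∧ b < c then T a b c else 0) = 0 := by
    simp only [← Finset.sum_add_distrib]
    refine Finset.sum_eq_zero fun a _ => Finset.sum_eq_zero fun b _ =>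
      Finset.sum_eq_zero fun c _ => ?_
    split_ifs
    · rw [← hc a b c]; ring
    · simp
  rw [Finset.sum_congr rfl fun i _ => Finset.sum_congr rfl fun j _ =>
    Finset.sum_congr rfl fun k _ => hsplit i j k]
  simp only [Finset.sum_add_distrib]
  rw [e1, e2, e3, add_zero]
  simp only [Finset.sum_ite_eq', Finset.sum_ite_eq, Finset.mem_univ, if_true]
  rw [sum_lt_symm (fun i k => T i k i) (fun i => h0 i i)]
  simp only [← Finset.sum_add_distrib]
  refine Finset.sum_congr rfl fun i _ => Finset.sum_congr rfl fun j _ => ?_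
  rw [hs j i j]
  split_ifs <;> simp

lemma sum_rearr {R : Type*} [CommSemiring R] (p : Fin n → Fin m → R) (g : Fin n → Fin m → R) :
    ∑ l, (∑ j, p l j) * ∑ i, g l i = ∑ i, ∑ j, ∑ l, p l j * g l i := by
  have h : ∀ l, (∑ j, p l j) * ∑ i, g l i = ∑ i, ∑ j, p l j * g l i := by
    intro l
    rw [Finset.sum_mul_sum, Finset.sum_comm]
  simp only [h]
  rw [Finset.sum_comm]
  exact Finset.sum_congr rfl fun i _ => Finset.sum_comm

lemma sum_rearr2 {R : Type*} [CommSemiring R] (p : Fin n → Fin m → R)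
    (g : Fin n → Fin m → Fin m → R) :
    ∑ l, (∑ j, p l j) * ∑ i, ∑ i', g l i i' = ∑ i, ∑ i', ∑ j, ∑ l, p l j * g l i i' := by
  have h : ∀ l, (∑ j, p l j) * ∑ i, ∑ i', g l i i' = ∑ i, (∑ j, p l j) * ∑ i', g l i i' :=
    fun l => Finset.mul_sum _ _ _
  simp only [h]
  rw [Finset.sum_comm]
  exact Finset.sum_congr rfl fun i _ => sum_rearr p (fun l i' => g l i i')

lemma reverse_identity (hQ : IsQuadraticMap Q)
    (P : (Fin n → ZMod 2) →ₗ[ZMod 2] (Fin m → ZMod 2) →ₗ[ZMod 2] (Fin n → ZMod 2))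
    (hP : ∀ x y : Fin m → ZMod 2, P (Q x) y = qpolar Q x y + P (qpolar Q x y) x) (k : Fin n) :
    bockstein (assocPoly Q k) = ∑ l, (∑ j, C (P (Pi.single l 1) (Pi.single j 1) k) * X j)
      * assocPoly Q l := by
  have hPexp : ∀ (v : Fin n → ZMod 2) (y), P v y k = ∑ l, P (Pi.single l 1) y k * v l := by
    intro v y
    conv_lhs => rw [vec_sum v]
    simp [mul_comm]
  have hpol : ∀ x x' y, P (qpolar Q x x') y + P (qpolar Q x y) x' + P (qpolar Q x' y) x = 0 := by
    intro x x' y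
    have h1 := hP (x + x') y
    have h2 := hP x y
    have h3 := hP x' y
    have h4 : qpolar Q x x' = Q (x + x') + Q x + Q x' := rfl
    rw [h4]
    simp only [map_add, LinearMap.add_apply, h1, h2, h3, hQ.1]
    ext i
    simp only [Pi.add_apply, Pi.zero_apply]
    generalize qpolar Q x y i = a
    generalize qpolar Q x' y i = b
    generalize P (qpolar Q x y) x i = c
    generalize P (qpolar Q x y) x' i = d
    generalize P (qpolar Q x' y) x i = e
    generalize P (qpolar Q x' y) x' i = f
    linear_combination CharTwo.add_self_eq_zero a + CharTwo.add_self_eq_zero b +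
      CharTwo.add_self_eq_zero c + CharTwo.add_self_eq_zero d + CharTwo.add_self_eq_zero e +
      CharTwo.add_self_eq_zero f
  let e : Fin m → Fin m → ZMod 2 := fun i => Pi.single i 1
  let T : Fin m → Fin m → Fin m → MvPolynomial (Fin m) (ZMod 2) := fun i j r =>
    C (P (qpolar Q (e i) (e j)) (e r) k) * (X i * X j * X r)
  have hT := triple_sum T (fun i j r => by simp only [T]; rw [qpolar_symm]; ring)
    (fun i r => by simp [T, qpolar_self hQ]) (fun i j r => by
      have := congrArg (fun v => C (σ := Fin m) (v k) * (X i * X j * X r))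
        (hpol (e i) (e j) (e r))
      simp only [Pi.add_apply, Pi.zero_apply, map_add, map_zero, zero_mul] at this
      rw [← this]; simp only [T]; ring)
  have hrhs : ∑ l, (∑ j, C (P (Pi.single l 1) (Pi.single j 1) k) * X j) * assocPoly Q l =
      ∑ i, ∑ r, C (P (Q (e i)) (e r) k) * (X i ^ 2 * X r) +
      ∑ i, ∑ j, ∑ r, (if i < j then T i j r else 0) := by
    have hA : ∀ i r, C (P (Q (e i)) (e r) k) * (X i ^ 2 * X r : MvPolynomial (Fin m) (ZMod 2)) =
        ∑ l, C (P (Pi.single l 1) (e r) k) * X r * (C (Q (e i) l) * X i ^ 2) := by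
      intro i r
      rw [hPexp, map_sum, Finset.sum_mul]
      refine Finset.sum_congr rfl fun l _ => ?_
      rw [map_mul]; ring
    have hB : ∀ i j r, (if i < j then T i j r else 0) =
        ∑ l, C (P (Pi.single l 1) (e r) k) * X r *
          (if i < j then C (qpolar Q (e i) (e j) l) * X i * X j else 0) := by
      intro i j r
      split_ifs
      · simp only [T]
        rw [hPexp, map_sum, Finset.sum_mul]
        refine Finset.sum_congr rfl fun l _ => ?_
        rw [map_mul]; ring
      · simp
    simp only [hA, hB, assocPoly, mul_add, Finset.sum_add_distrib]
    congr 1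
    · exact sum_rearr _ _
    · exact sum_rearr2 _ _
  rw [hrhs, hT]
  have hlhs : bockstein (assocPoly Q k) =
      ∑ i, ∑ r, C (qpolar Q (e i) (e r) k) * (X i ^ 2 * X r) := by
    rw [bockstein_assoc, sum_lt_symm
      (fun i r => C (qpolar Q (e i) (e r) k) * (X i ^ 2 * X r : MvPolynomial (Fin m) (ZMod 2)))]
    · refine Finset.sum_congr rfl fun i _ => Finset.sum_congr rfl fun j _ => ?_
      rw [qpolar_symm (e j) (e i)]
      split_ifs
      · simp only [e]; ring
      · rfl
    · intro i; simp [qpolar_self hQ]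
  rw [hlhs]
  simp only [← Finset.sum_add_distrib]
  refine Finset.sum_congr rfl fun i _ => Finset.sum_congr rfl fun r _ => ?_
  rw [hP]
  simp only [T, Pi.add_apply, map_add]
  linear_combination -(two_eq (C (P (qpolar Q (e i) (e r)) (e i) k) * (X i ^ 2 * X r)))

end BocksteinAux

/-- A quadratic map `Q : F₂^m → F₂^n` is Bockstein closed iff there is an
`F₂`-bilinear map `P : F₂^n × F₂^m → F₂^n` with `P(Q(x),y) = B(x,y) + P(B(x,y),x)`. -/
theorem bockstein_closed_iff_exists_bilinear {m n : ℕ}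
    (Q : (Fin m → ZMod 2) → (Fin n → ZMod 2)) (hQ : IsQuadraticMap Q) :
    (∀ k : Fin n, bockstein (assocPoly Q k) ∈ Ideal.span (Set.range (assocPoly Q))) ↔
    (∃ P : (Fin n → ZMod 2) →ₗ[ZMod 2] (Fin m → ZMod 2) →ₗ[ZMod 2] (Fin n → ZMod 2),
      ∀ x y : Fin m → ZMod 2, P (Q x) y = qpolar Q x y + P (qpolar Q x y) x) := by
  constructor
  · intro h
    choose a ha using fun k => exists_linear k (h k)
    let P : (Fin n → ZMod 2) →ₗ[ZMod 2] (Fin m → ZMod 2) →ₗ[ZMod 2] (Fin n → ZMod 2) :=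
      LinearMap.mk₂ (ZMod 2) (fun v y k => ∑ l, (∑ j, a k l j * y j) * v l)
        (by intros; ext; simp [mul_add, Finset.sum_add_distrib])
        (by intros; ext; simp only [Pi.smul_apply, smul_eq_mul, Finset.mul_sum]
            exact Finset.sum_congr rfl fun _ _ => by ring)
        (by intros; ext; simp [mul_add, add_mul, Finset.sum_add_distrib])
        (by intros; ext; simp only [Pi.smul_apply, smul_eq_mul, Finset.mul_sum, Finset.sum_mul]
            exact Finset.sum_congr rfl fun _ _ => Finset.sum_congr rfl fun _ _ => by ring)
    refine ⟨P, fun x y => ?_⟩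
    ext k
    have h1 := congrArg (fun p => eval x (dirDer y p)) (ha k)
    simp only [dirDer_bock hQ, map_sum, Derivation.leibniz, map_add, smul_eq_mul, map_mul,
      dirDer_assoc hQ, eval_assoc hQ, dirDer_X, eval_X, eval_C, dirDer_C] at h1
    have h2 : qpolar Q x y k = P (qpolar Q x y) x k + P (Q x) y k := by
      rw [h1]
      simp only [P, LinearMap.mk₂_apply, ← Finset.sum_add_distrib]
      refine Finset.sum_congr rfl fun l _ => ?_
      simp [derivation_C, mul_comm]
    rw [Pi.add_apply, h2]
    linear_combination -(CharTwo.add_self_eq_zero (P (qpolar Q x y) x k))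
  · rintro ⟨P, hP⟩ k
    rw [reverse_identity hQ P hP k]
    exact Ideal.sum_mem _ fun l _ => Ideal.mul_mem_left _ _ (Ideal.subset_span ⟨l, rfl⟩)
end

section
/- Let Q : W → V be a quadratic map between F₂-vector spaces with associated bilinear map B, and let P : V × W → V be an F₂-bilinear map satisfying P(Q(x), y) = B(x,y) + P(B(x,y), x) for all x, y ∈ W. Then P(B(x,y), z) + P(B(y,z), x) + P(B(z,x), y) = 0 for all x, y, z ∈ W. -/
/-- If `P` is bilinear and satisfies `P(Q(x),y) = B(x,y) + P(B(x,y),x)`,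
then `P(B(x,y),z) + P(B(y,z),x) + P(B(z,x),y) = 0`. -/
theorem cyclic_identity {W V : Type*} [AddCommGroup W] [Module (ZMod 2) W]
    [AddCommGroup V] [Module (ZMod 2) V]
    (Q : W → V) (hQ : IsQuadraticMap Q)
    (P : V →ₗ[ZMod 2] W →ₗ[ZMod 2] V)
    (hP : ∀ x y : W, P (Q x) y = qpolar Q x y + P (qpolar Q x y) x) :
    ∀ x y z : W, P (qpolar Q x y) z + P (qpolar Q y z) x + P (qpolar Q z x) y = 0 := by
  intro x y z
  have two : ∀ v : V, v + v = 0 := fun v => by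
    rw [← two_smul (ZMod 2) v, show (2 : ZMod 2) = 0 from rfl, zero_smul]
  have hs : qpolar Q z x = qpolar Q x z := by
    simp only [qpolar]
    rw [add_comm z x]
    abel
  have h1 := hP (x + y) z
  have hxy : Q (x + y) = qpolar Q x y + Q x + Q y := by
    have a := two (Q x)
    have b := two (Q y)
    have : qpolar Q x y + Q x + Q y = Q (x + y) + (Q x + Q x) + (Q y + Q y) := by
      simp only [qpolar]
      abel
    rw [this, a, b, add_zero, add_zero]
  rw [hQ.1 x y z, hxy] at h1
  simp only [map_add, LinearMap.add_apply, hP x z, hP y z] at h1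
  have h2 : P (qpolar Q x y) z = P (qpolar Q y z) x + P (qpolar Q x z) y := by
    rw [← sub_eq_zero] at h1 ⊢
    rw [← h1]
    abel
  rw [hs, h2]
  have a := two (P (qpolar Q y z) x + P (qpolar Q x z) y)
  rw [← a]
  abel
end

section
/- Let L be an n×n matrix over the polynomial ring F₂[x₁,…,x_m] all of whose entries are homogeneous linear forms. Then there exists an invertible scalar matrix N ∈ GL_n(F₂) such that N⁻¹LN is diagonal if and only if β(L) + L² = 0, where β is applied entrywise. Equivalently, writing L = Σ_i L_i x_i with L_i ∈ M_n(F₂), such an N exists if and only if L_i² = L_i for all i and L_iL_j = L_jL_i for all i, j. -/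
open MvPolynomial

lemma aux_entry {m n : ℕ} (Ls : Fin m → Matrix (Fin n) (Fin n) (ZMod 2)) (r c : Fin n) :
    (∑ i : Fin m, (X i : MvPolynomial (Fin m) (ZMod 2)) • (Ls i).map (C : ZMod 2 →+* MvPolynomial (Fin m) (ZMod 2))) r c
      = ∑ i : Fin m, X i * C (Ls i r c) := by
  simp [Matrix.sum_apply]

lemma aux_bock {m n : ℕ} (Ls : Fin m → Matrix (Fin n) (Fin n) (ZMod 2)) :
    (∑ i : Fin m, (X i : MvPolynomial (Fin m) (ZMod 2)) • (Ls i).map (C : ZMod 2 →+* MvPolynomial (Fin m) (ZMod 2))).map bockstein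
      = ∑ i : Fin m, (X i ^ 2 : MvPolynomial (Fin m) (ZMod 2)) • (Ls i).map (C : ZMod 2 →+* MvPolynomial (Fin m) (ZMod 2)) := by
  ext1 r c
  rw [Matrix.map_apply, aux_entry]
  simp only [bockstein, map_sum, Matrix.sum_apply, Matrix.smul_apply, Matrix.map_apply,
    smul_eq_mul]
  refine Finset.sum_congr rfl fun i _ => ?_
  congr 1
  rw [Finset.sum_eq_single i]
  · simp [Derivation.leibniz]
  · intro j _ hj
    simp [Derivation.leibniz, pderiv_X, Pi.single_apply, hj]
  · simp

lemma aux_eval {m n : ℕ} (Ls : Fin m → Matrix (Fin n) (Fin n) (ZMod 2)) (i : Fin m) :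
    (∑ i : Fin m, (X i : MvPolynomial (Fin m) (ZMod 2)) • (Ls i).map (C : ZMod 2 →+* MvPolynomial (Fin m) (ZMod 2))).map
      (eval (Pi.single i 1)) = Ls i := by
  ext1 r c
  rw [Matrix.map_apply, aux_entry]
  simp [Pi.single_apply]

lemma aux_eval2 {m n : ℕ} (Ls : Fin m → Matrix (Fin n) (Fin n) (ZMod 2)) (a : Fin m → ZMod 2) :
    (∑ i : Fin m, (X i : MvPolynomial (Fin m) (ZMod 2)) • (Ls i).map (C : ZMod 2 →+* MvPolynomial (Fin m) (ZMod 2))).map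
      (eval a) = ∑ i, a i • Ls i := by
  ext1 r c
  rw [Matrix.map_apply, aux_entry]
  simp [Matrix.sum_apply]

lemma aux_eval3 {m n : ℕ} (Ls : Fin m → Matrix (Fin n) (Fin n) (ZMod 2)) (a : Fin m → ZMod 2) :
    (∑ i : Fin m, (X i ^ 2 : MvPolynomial (Fin m) (ZMod 2)) • (Ls i).map (C : ZMod 2 →+* MvPolynomial (Fin m) (ZMod 2))).map
      (eval a) = ∑ i, a i • Ls i := by
  ext1 r c
  have h : ∀ z : ZMod 2, z ^ 2 = z := by decide
  simp [Matrix.sum_apply, h]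

lemma aux_char {n : ℕ} {R : Type*} [CommRing R] [CharP R 2] (A : Matrix (Fin n) (Fin n) R) :
    A + A = 0 := by
  ext1 r c
  exact CharTwo.add_self_eq_zero _

lemma aux_sq {m n : ℕ} (Ls : Fin m → Matrix (Fin n) (Fin n) (ZMod 2))
    (h1 : ∀ i, Ls i * Ls i = Ls i) (h2 : ∀ i j, Ls i * Ls j = Ls j * Ls i) (s : Finset (Fin m)) :
    (∑ i ∈ s, (X i : MvPolynomial (Fin m) (ZMod 2)) • (Ls i).map (C : ZMod 2 →+* MvPolynomial (Fin m) (ZMod 2))) *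
    (∑ i ∈ s, (X i : MvPolynomial (Fin m) (ZMod 2)) • (Ls i).map (C : ZMod 2 →+* MvPolynomial (Fin m) (ZMod 2))) =
    ∑ i ∈ s, (X i ^ 2 : MvPolynomial (Fin m) (ZMod 2)) • (Ls i).map (C : ZMod 2 →+* MvPolynomial (Fin m) (ZMod 2)) := by
  classical
  induction s using Finset.induction_on with
  | empty => simp
  | insert a s ha ih =>
    rw [Finset.sum_insert ha, Finset.sum_insert ha, ← ih]
    set S := ∑ i ∈ s, (X i : MvPolynomial (Fin m) (ZMod 2)) • (Ls i).map (C : ZMod 2 →+* MvPolynomial (Fin m) (ZMod 2)) with hS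
    have hc : ((X a : MvPolynomial (Fin m) (ZMod 2)) • (Ls a).map (C : ZMod 2 →+* MvPolynomial (Fin m) (ZMod 2))) * S
        = S * ((X a : MvPolynomial (Fin m) (ZMod 2)) • (Ls a).map (C : ZMod 2 →+* MvPolynomial (Fin m) (ZMod 2))) := by
      rw [hS, Finset.mul_sum, Finset.sum_mul]
      refine Finset.sum_congr rfl fun j _ => ?_
      rw [Matrix.smul_mul, Matrix.mul_smul, Matrix.smul_mul, Matrix.mul_smul, smul_comm,
        ← Matrix.map_mul, ← Matrix.map_mul, h2]
    rw [add_mul, mul_add, mul_add, hc]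
    have e : ((X a : MvPolynomial (Fin m) (ZMod 2)) • (Ls a).map (C : ZMod 2 →+* MvPolynomial (Fin m) (ZMod 2))) *
        ((X a : MvPolynomial (Fin m) (ZMod 2)) • (Ls a).map (C : ZMod 2 →+* MvPolynomial (Fin m) (ZMod 2))) =
        (X a ^ 2 : MvPolynomial (Fin m) (ZMod 2)) • (Ls a).map (C : ZMod 2 →+* MvPolynomial (Fin m) (ZMod 2)) := by
      rw [Matrix.smul_mul, Matrix.mul_smul, ← Matrix.map_mul, h1, smul_smul, sq]
    rw [e]
    have := aux_char (S * ((X a : MvPolynomial (Fin m) (ZMod 2)) • (Ls a).map (C : ZMod 2 →+* MvPolynomial (Fin m) (ZMod 2))))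
    rw [add_assoc, ← add_assoc (S * _) (S * _), this, zero_add]

lemma aux_span {m n : ℕ} (Ls : Fin m → Matrix (Fin n) (Fin n) (ZMod 2))
    (h1 : ∀ i, Ls i * Ls i = Ls i) (h2 : ∀ i j, Ls i * Ls j = Ls j * Ls i) (s : Finset (Fin m)) :
    Submodule.span (ZMod 2) {v : Fin n → ZMod 2 | ∀ i ∈ s, ∃ c : ZMod 2, (Ls i).mulVec v = c • v}
      = ⊤ := by
  classical
  induction s using Finset.induction_on with
  | empty => simp
  | insert a s ha ih =>
    rw [eq_top_iff, ← ih, Submodule.span_le]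
    intro v hv
    have e : v = (Ls a).mulVec v + (v - (Ls a).mulVec v) := by abel
    have comm : ∀ i ∈ s, ∃ c : ZMod 2, (Ls i).mulVec v = c • v ∧
        (Ls i).mulVec ((Ls a).mulVec v) = c • (Ls a).mulVec v := by
      intro i hi
      obtain ⟨c, hc⟩ := hv i hi
      refine ⟨c, hc, ?_⟩
      rw [Matrix.mulVec_mulVec, h2, ← Matrix.mulVec_mulVec, hc, Matrix.mulVec_smul]
    rw [SetLike.mem_coe, e]
    refine Submodule.add_mem _ (Submodule.subset_span ?_) (Submodule.subset_span ?_)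
    · intro i hi
      rcases Finset.mem_insert.1 hi with rfl | hi
      · exact ⟨1, by rw [Matrix.mulVec_mulVec, h1, one_smul]⟩
      · obtain ⟨c, _, hc⟩ := comm i hi
        exact ⟨c, hc⟩
    · intro i hi
      rcases Finset.mem_insert.1 hi with rfl | hi
      · exact ⟨0, by rw [Matrix.mulVec_sub, Matrix.mulVec_mulVec, h1, zero_smul, sub_self]⟩
      · obtain ⟨c, hc', hc⟩ := comm i hi
        exact ⟨c, by rw [Matrix.mulVec_sub, hc, hc', smul_sub]⟩

lemma aux_diag {m n : ℕ} (Ls : Fin m → Matrix (Fin n) (Fin n) (ZMod 2))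
    (h1 : ∀ i, Ls i * Ls i = Ls i) (h2 : ∀ i j, Ls i * Ls j = Ls j * Ls i) :
    ∃ N : Matrix (Fin n) (Fin n) (ZMod 2), IsUnit N ∧ ∀ i, (N⁻¹ * Ls i * N).IsDiag := by
  classical
  have hs := (aux_span Ls h1 h2 Finset.univ).ge
  let b0 := Module.Basis.ofSpan hs
  have hb0 : ∀ k, b0 k ∈ {v : Fin n → ZMod 2 | ∀ i ∈ Finset.univ, ∃ c : ZMod 2,
      (Ls i).mulVec v = c • v} := fun k =>
    Module.Basis.ofSpan_subset hs (Set.mem_range_self k)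
  let b := b0.reindex (b0.indexEquiv (Pi.basisFun (ZMod 2) (Fin n)))
  have hb : ∀ k i, ∃ c : ZMod 2, (Ls i).mulVec (b k) = c • b k := by
    intro k i
    simp only [b, Module.Basis.reindex_apply]
    exact hb0 _ i (Finset.mem_univ _)
  choose d hd using hb
  let N : Matrix (Fin n) (Fin n) (ZMod 2) := Matrix.of fun r k => b k r
  have hN : IsUnit N := by
    rw [← Matrix.linearIndependent_cols_iff_isUnit]
    exact b.linearIndependent
  refine ⟨N, hN, fun i => ?_⟩
  have : Ls i * N = N * Matrix.diagonal (fun k => d k i) := by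
    ext r k
    rw [Matrix.mul_diagonal]
    have := congrFun (hd k i) r
    simp only [Matrix.mulVec, dotProduct, Pi.smul_apply, smul_eq_mul] at this
    simp only [Matrix.mul_apply, N, Matrix.of_apply]
    rw [this, mul_comm]
  rw [mul_assoc, this, ← mul_assoc, Matrix.nonsing_inv_mul _ ((Matrix.isUnit_iff_isUnit_det _).1 hN),
    one_mul]
  exact Matrix.isDiag_diagonal _

lemma aux_AC {m n : ℕ} (Ls : Fin m → Matrix (Fin n) (Fin n) (ZMod 2))
    (N : Matrix (Fin n) (Fin n) (ZMod 2)) (hN : IsUnit N)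
    (h : ∀ i, (N⁻¹ * Ls i * N).IsDiag) :
    (∀ i, Ls i * Ls i = Ls i) ∧ ∀ i j, Ls i * Ls j = Ls j * Ls i := by
  have hu := (Matrix.isUnit_iff_isUnit_det _).1 hN
  have hL : ∀ i, ∃ d, Ls i = N * Matrix.diagonal d * N⁻¹ := by
    intro i
    refine ⟨(N⁻¹ * Ls i * N).diag, ?_⟩
    · rw [(h i).diagonal_diag, ← mul_assoc, ← mul_assoc, Matrix.mul_nonsing_inv _ hu, one_mul,
        mul_assoc, Matrix.mul_nonsing_inv _ hu, mul_one]
  choose d hd using hL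
  have hp : ∀ i j, Ls i * Ls j = N * Matrix.diagonal (fun k => d i k * d j k) * N⁻¹ := by
    intro i j
    rw [hd i, hd j, ← Matrix.diagonal_mul_diagonal]
    simp only [mul_assoc]
    rw [← mul_assoc N⁻¹ N, Matrix.nonsing_inv_mul _ hu, one_mul]
  have hz : ∀ z : ZMod 2, z * z = z := by decide
  refine ⟨fun i => ?_, fun i j => ?_⟩
  · rw [hp]
    simp only [hz]
    exact (hd i).symm
  · rw [hp, hp]
    simp only [mul_comm]

lemma aux_A {m n : ℕ} (Ls : Fin m → Matrix (Fin n) (Fin n) (ZMod 2))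
    (N : Matrix (Fin n) (Fin n) (ZMod 2)) :
    ((N⁻¹).map (C : ZMod 2 →+* MvPolynomial (Fin m) (ZMod 2)) * (∑ i : Fin m, (X i : MvPolynomial (Fin m) (ZMod 2)) • (Ls i).map (C : ZMod 2 →+* MvPolynomial (Fin m) (ZMod 2)))
      * N.map (C : ZMod 2 →+* MvPolynomial (Fin m) (ZMod 2))).IsDiag ↔ ∀ i, (N⁻¹ * Ls i * N).IsDiag := by
  have e : (N⁻¹).map (C : ZMod 2 →+* MvPolynomial (Fin m) (ZMod 2)) * (∑ i : Fin m, (X i : MvPolynomial (Fin m) (ZMod 2)) • (Ls i).map (C : ZMod 2 →+* MvPolynomial (Fin m) (ZMod 2)))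
      * N.map (C : ZMod 2 →+* MvPolynomial (Fin m) (ZMod 2)) = ∑ i : Fin m, (X i : MvPolynomial (Fin m) (ZMod 2)) •
        (N⁻¹ * Ls i * N).map (C : ZMod 2 →+* MvPolynomial (Fin m) (ZMod 2)) := by
    rw [Finset.mul_sum, Finset.sum_mul]
    refine Finset.sum_congr rfl fun i _ => ?_
    rw [Matrix.mul_smul, Matrix.smul_mul, ← Matrix.map_mul, ← Matrix.map_mul]
  rw [e]
  constructor
  · intro h i
    rw [← aux_eval (fun i => N⁻¹ * Ls i * N) i]
    exact h.map (map_zero _)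
  · intro h r c hrc
    rw [aux_entry]
    refine Finset.sum_eq_zero fun i _ => ?_
    rw [h i hrc, map_zero, mul_zero]

lemma aux_BC {m n : ℕ} (Ls : Fin m → Matrix (Fin n) (Fin n) (ZMod 2))
    (L : Matrix (Fin n) (Fin n) (MvPolynomial (Fin m) (ZMod 2)))
    (hL : L = ∑ i : Fin m, (X i : MvPolynomial (Fin m) (ZMod 2)) • (Ls i).map (C : ZMod 2 →+* MvPolynomial (Fin m) (ZMod 2))) :
    L.map bockstein + L * L = 0 ↔
      ((∀ i, Ls i * Ls i = Ls i) ∧ ∀ i j, Ls i * Ls j = Ls j * Ls i) := by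
  subst hL
  rw [aux_bock]
  constructor
  · intro h
    have key : ∀ a : Fin m → ZMod 2, (∑ i, a i • Ls i) + (∑ i, a i • Ls i) * (∑ i, a i • Ls i)
        = 0 := by
      intro a
      have := congrArg (fun M => M.map (eval a)) h
      simp only [Matrix.map_add (eval a) (map_add _), Matrix.map_mul, aux_eval2, aux_eval3,
        Matrix.map_zero (eval a) (map_zero _)] at this
      exact this
    have k1 : ∀ i, Ls i + Ls i * Ls i = 0 := by
      intro i
      simpa [Pi.single_apply, ite_smul] using key (Pi.single i 1)
    refine ⟨fun i => ?_, fun i j => ?_⟩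
    · have := k1 i
      have h0 := aux_char (Ls i)
      exact add_left_cancel (this.trans h0.symm)
    · have k2 := key (Pi.single i 1 + Pi.single j 1)
      simp only [Pi.add_apply, add_smul, Finset.sum_add_distrib, Pi.single_apply, ite_smul,
        one_smul, zero_smul, Finset.sum_ite_eq', Finset.sum_ite_eq, Finset.mem_univ, if_true] at k2
      have h0 := aux_char (Ls j * Ls i)
      have : Ls i * Ls j + Ls j * Ls i = 0 := by
        have e : Ls i + Ls j + (Ls i + Ls j) * (Ls i + Ls j) =
          (Ls i + Ls i * Ls i) + (Ls j + Ls j * Ls j) + (Ls i * Ls j + Ls j * Ls i) := by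
          noncomm_ring
        rw [e, k1, k1, zero_add, zero_add] at k2
        exact k2
      exact add_right_cancel (this.trans h0.symm)
  · rintro ⟨h1, h2⟩
    rw [aux_sq Ls h1 h2, aux_char]

/-- A matrix `L = Σ_i L_i x_i` of homogeneous linear forms over
`F₂[x₁,…,x_m]` is diagonalizable by a scalar matrix `N ∈ GL_n(F₂)` iff
`β(L) + L² = 0`, equivalently iff `L_i² = L_i` for all `i` and the `L_i` commute. -/
theorem diagonalizable_iff_bockstein_plus_square_eq_zero {m n : ℕ}
    (Ls : Fin m → Matrix (Fin n) (Fin n) (ZMod 2))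
    (L : Matrix (Fin n) (Fin n) (MvPolynomial (Fin m) (ZMod 2)))
    (hL : L = ∑ i : Fin m, (X i : MvPolynomial (Fin m) (ZMod 2)) • (Ls i).map C) :
    ((∃ N : Matrix (Fin n) (Fin n) (ZMod 2), IsUnit N ∧
        (((N⁻¹).map C * L * N.map C).IsDiag)) ↔
      L.map bockstein + L * L = 0) ∧
    ((∃ N : Matrix (Fin n) (Fin n) (ZMod 2), IsUnit N ∧
        (((N⁻¹).map C * L * N.map C).IsDiag)) ↔
      ((∀ i, Ls i * Ls i = Ls i) ∧ ∀ i j, Ls i * Ls j = Ls j * Ls i)) := by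
  have hAC : (∃ N : Matrix (Fin n) (Fin n) (ZMod 2), IsUnit N ∧
        (((N⁻¹).map C * L * N.map C).IsDiag)) ↔
      ((∀ i, Ls i * Ls i = Ls i) ∧ ∀ i j, Ls i * Ls j = Ls j * Ls i) := by
    subst hL
    simp only [aux_A]
    exact ⟨fun ⟨N, hN, h⟩ => aux_AC Ls N hN h, fun ⟨h1, h2⟩ => aux_diag Ls h1 h2⟩
  exact ⟨hAC.trans (aux_BC Ls L hL).symm, hAC⟩
end

section
/- Let q ∈ F₂[x₁,…,x_m] be a homogeneous polynomial of degree 2. Then q is a product of two homogeneous linear forms if and only if there exists a homogeneous linear form ℓ ∈ F₂[x₁,…,x_m] with β(q) = ℓ·q. Moreover, if q = uv with u, v homogeneous linear forms, then β(q) = (u+v)·q. -/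
open MvPolynomial

lemma zmod_two_sq (c : ZMod 2) : c ^ 2 = c := by
  revert c; decide

lemma pderiv_linear_const {m : ℕ} {u : MvPolynomial (Fin m) (ZMod 2)} (hu : u.IsHomogeneous 1)
    (i : Fin m) : ∃ c : ZMod 2, pderiv i u = C c := by
  have h : (pderiv i u).IsHomogeneous 0 := hu.pderiv
  exact ⟨_, totalDegree_eq_zero_iff_eq_C.1 ((totalDegree_zero_iff_isHomogeneous _).2 h)⟩

lemma euler_linear {m : ℕ} {u : MvPolynomial (Fin m) (ZMod 2)} (hu : u.IsHomogeneous 1) :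
    ∑ i : Fin m, X i * pderiv i u = u := by
  simpa using hu.sum_X_mul_pderiv

lemma bockstein_linear {m : ℕ} {u : MvPolynomial (Fin m) (ZMod 2)} (hu : u.IsHomogeneous 1) :
    bockstein u = u ^ 2 := by
  conv_rhs => rw [← euler_linear hu]
  rw [sum_pow_char 2, bockstein]
  refine Finset.sum_congr rfl fun i _ => ?_
  obtain ⟨c, hc⟩ := pderiv_linear_const hu i
  rw [hc, mul_pow, ← C_pow, zmod_two_sq]

lemma bockstein_mul {m : ℕ} (u v : MvPolynomial (Fin m) (ZMod 2)) :
    bockstein (u * v) = bockstein u * v + u * bockstein v := by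
  simp only [bockstein, Finset.sum_mul, Finset.mul_sum, ← Finset.sum_add_distrib]
  refine Finset.sum_congr rfl fun i _ => ?_
  rw [pderiv_mul]; ring

lemma pderiv_comm_two {m : ℕ} (i j : Fin m) (f : MvPolynomial (Fin m) (ZMod 2)) :
    pderiv i (pderiv j f) = pderiv j (pderiv i f) := by
  have h : ⁅(pderiv i : Derivation (ZMod 2) (MvPolynomial (Fin m) (ZMod 2)) (MvPolynomial (Fin m) (ZMod 2))),
      (pderiv j : Derivation (ZMod 2) (MvPolynomial (Fin m) (ZMod 2)) (MvPolynomial (Fin m) (ZMod 2)))⁆ = 0 := by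
    apply MvPolynomial.derivation_ext
    intro k
    rw [Derivation.commutator_apply]
    simp only [pderiv_X, Pi.single_apply]
    split_ifs <;> simp
  have := congrArg (fun D => D f) h
  simp only [Derivation.commutator_apply, Derivation.coe_zero, Pi.zero_apply] at this
  exact sub_eq_zero.1 this

lemma pderiv_bockstein {m : ℕ} (k : Fin m) (f : MvPolynomial (Fin m) (ZMod 2)) :
    pderiv k (bockstein f) = bockstein (pderiv k f) := by
  simp only [bockstein, map_sum]
  refine Finset.sum_congr rfl fun i _ => ?_
  have h2 : (2 : MvPolynomial (Fin m) (ZMod 2)) = 0 := CharTwo.two_eq_zero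
  rw [pderiv_mul, pderiv_pow, pderiv_comm_two]
  simp [h2]

/-- A quadratic form all of whose partial derivatives vanish is a square. -/
lemma square_of_pderiv_zero {m : ℕ} {q : MvPolynomial (Fin m) (ZMod 2)} (hq : q.IsHomogeneous 2)
    (h : ∀ i, pderiv i q = 0) : ∃ u, u.IsHomogeneous 1 ∧ q = u * u := by
  have hev : ∀ d ∈ q.support, d = 2 • d.mapRange (· / 2) (by simp) := by
    intro d hd
    ext i
    simp only [Finsupp.smul_apply, Finsupp.mapRange_apply, smul_eq_mul]
    by_contra hne
    have hodd : d i % 2 = 1 := by omega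
    have hle : Finsupp.single i 1 ≤ d := by
      simp only [Finsupp.single_le_iff]; omega
    have hc := congrArg (coeff (d - Finsupp.single i 1)) (h i)
    rw [coeff_pderiv, tsub_add_cancel_of_le hle] at hc
    have h1 : ((d - Finsupp.single i 1 : Fin m →₀ ℕ) i : ZMod 2) + 1 = 1 := by
      have : (d - Finsupp.single i 1 : Fin m →₀ ℕ) i = 2 * (d i / 2) := by
        simp; omega
      rw [this]; push_cast
      rw [show (2 : ZMod 2) = 0 from rfl]; ring
    rw [h1] at hc
    exact (mem_support_iff.1 hd) (by simpa using hc)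
  refine ⟨∑ d ∈ q.support, monomial (d.mapRange (· / 2) (by simp)) (coeff d q), ?_, ?_⟩
  · refine IsHomogeneous.sum _ _ _ fun d hd => isHomogeneous_monomial _ ?_
    have h2 : d.degree = 2 := by
      have := hq (mem_support_iff.1 hd)
      rw [Finsupp.degree_eq_weight_one]
      exact this
    rw [hev d hd, map_nsmul] at h2
    simp only [smul_eq_mul] at h2
    omega
  · rw [← pow_two, sum_pow_char 2]
    conv_lhs => rw [q.as_sum]
    refine Finset.sum_congr rfl fun d hd => ?_
    rw [monomial_pow, zmod_two_sq, ← hev d hd]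

/-- A homogeneous quadratic polynomial `q` over `F₂` is a product of two
homogeneous linear forms iff `β(q) = ℓ·q` for some homogeneous linear form `ℓ`; moreover
if `q = uv` with `u, v` linear then `β(q) = (u+v)·q`. -/
theorem quadratic_reducible_iff_bockstein_multiple {m : ℕ}
    (q : MvPolynomial (Fin m) (ZMod 2)) (hq : q.IsHomogeneous 2) :
    ((∃ u v : MvPolynomial (Fin m) (ZMod 2),
        u.IsHomogeneous 1 ∧ v.IsHomogeneous 1 ∧ q = u * v) ↔
      (∃ ℓ : MvPolynomial (Fin m) (ZMod 2), ℓ.IsHomogeneous 1 ∧ bockstein q = ℓ * q)) ∧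
    (∀ u v : MvPolynomial (Fin m) (ZMod 2),
      u.IsHomogeneous 1 → v.IsHomogeneous 1 → q = u * v → bockstein q = (u + v) * q) := by
  have key : ∀ u v : MvPolynomial (Fin m) (ZMod 2),
      u.IsHomogeneous 1 → v.IsHomogeneous 1 → q = u * v → bockstein q = (u + v) * q := by
    rintro u v hu hv rfl
    rw [bockstein_mul, bockstein_linear hu, bockstein_linear hv]; ring
  refine ⟨⟨?_, ?_⟩, key⟩
  · rintro ⟨u, v, hu, hv, h⟩
    exact ⟨u + v, hu.add hv, key u v hu hv h⟩
  · rintro ⟨l, hl, h⟩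
    have hlin : ∀ k, (pderiv k q).IsHomogeneous 1 := fun k => hq.pderiv
    have hk : ∀ k, pderiv k q ^ 2 = pderiv k l * q + l * pderiv k q := fun k => by
      rw [← bockstein_linear (hlin k), ← pderiv_bockstein, h, pderiv_mul]
    by_cases hz : ∀ k, pderiv k l = 0
    · have hl0 : l = 0 := by
        rw [← euler_linear hl]; simp [hz]
      obtain ⟨u, hu, hqu⟩ := square_of_pderiv_zero hq fun k => by
        have := hk k
        simpa [hl0] using this
      exact ⟨u, u, hu, hu, hqu⟩
    · push Not at hz
      obtain ⟨k, hkne⟩ := hz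
      obtain ⟨c, hc⟩ := pderiv_linear_const hl k
      have hc1 : c = 1 := by
        have : c ≠ 0 := by rintro rfl; exact hkne (by simp [hc])
        exact (show ∀ a : ZMod 2, a ≠ 0 → a = 1 by decide) c this
      have h3 := hk k
      rw [hc, hc1, C_1, one_mul] at h3
      refine ⟨pderiv k q, pderiv k q + l, hlin k, (hlin k).add hl, ?_⟩
      have h4 : l * pderiv k q + l * pderiv k q = 0 := CharTwo.add_self_eq_zero _
      linear_combination (-1 : MvPolynomial (Fin m) (ZMod 2)) * h3 - h4
end

section
/- Let L be an n×n matrix over F₂[x₁,…,x_m] all of whose entries are homogeneous linear forms, written L = Σ_i L_i x_i with L_i ∈ M_n(F₂). If L is triangulable, i.e., there exists N ∈ GL_n(F₂) such that N⁻¹L_iN is upper triangular for every i, then the matrix β(L) + L² over F₂[x₁,…,x_m] is nilpotent; in fact (β(L) + L²)ⁿ = 0. -/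
open MvPolynomial

theorem bockstein_lin {m : ℕ} (a : Fin m → ZMod 2) :
    bockstein (∑ i, (X i : MvPolynomial (Fin m) (ZMod 2)) * C (a i)) = ∑ i, X i ^ 2 * C (a i) := by
  unfold bockstein
  refine Finset.sum_congr rfl fun i _ => ?_
  congr 1
  rw [map_sum, Finset.sum_eq_single i]
  · simp [Derivation.leibniz]
  · intro b _ hb
    simp [Derivation.leibniz, pderiv_X_of_ne hb]
  · simp

theorem strict_pow {R : Type*} [CommRing R] {n : ℕ}
    (S : Matrix (Fin n) (Fin n) R) (h : S.BlockTriangular id) (hd : ∀ i, S i i = 0) :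
    S ^ n = 0 := by
  have h1 := Matrix.charpoly_of_isUpperTriangular S h
  have h2 := Matrix.aeval_self_charpoly S
  rw [h1] at h2
  simpa [hd] using h2

theorem tri_case {m n : ℕ} (A : Fin m → Matrix (Fin n) (Fin n) (ZMod 2))
    (hA : ∀ i, (A i).BlockTriangular id) :
    ((∑ i : Fin m, (X i ^ 2 : MvPolynomial (Fin m) (ZMod 2)) • (A i).map (C (σ := Fin m))) +
      (∑ i : Fin m, (X i : MvPolynomial (Fin m) (ZMod 2)) • (A i).map (C (σ := Fin m))) *
      (∑ i : Fin m, (X i : MvPolynomial (Fin m) (ZMod 2)) • (A i).map (C (σ := Fin m)))) ^ n = 0 := by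
  have key : ∀ f : Fin m → MvPolynomial (Fin m) (ZMod 2),
      (∑ i : Fin m, f i • (A i).map (C (σ := Fin m))).BlockTriangular id := by
    intro f j k hjk
    rw [Matrix.sum_apply]
    refine Finset.sum_eq_zero fun i _ => ?_
    simp [hA i hjk]
  apply strict_pow
  · exact (key _).add ((key _).mul (key _))
  · intro j
    have hT := key X
    set T := ∑ i : Fin m, (X i : MvPolynomial (Fin m) (ZMod 2)) • (A i).map (C (σ := Fin m)) with hTd
    have h1 : (T * T) j j = T j j ^ 2 := by
      rw [Matrix.mul_apply, Finset.sum_eq_single j]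
      · ring
      · intro k _ hk
        rcases lt_or_gt_of_ne hk with h | h
        · rw [hT (i := j) (j := k) h, zero_mul]
        · rw [hT (i := k) (j := j) h, mul_zero]
      · simp
    have h2 : T j j ^ 2 = ∑ i : Fin m, (X i ^ 2 : MvPolynomial (Fin m) (ZMod 2)) * C (A i j j) := by
      rw [hTd, Matrix.sum_apply, sum_pow_char 2]
      refine Finset.sum_congr rfl fun i _ => ?_
      have : (A i j j) ^ 2 = A i j j := ZMod.pow_card _
      simp [mul_pow, ← map_pow, this]
    rw [Matrix.add_apply, h1, h2, Matrix.sum_apply]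
    simp [CharTwo.add_self_eq_zero]

/-- If `L = Σ_i L_i x_i` is a matrix of homogeneous linear forms over
`F₂[x₁,…,x_m]` and there exists `N ∈ GL_n(F₂)` with each `N⁻¹L_iN` upper triangular,
then `(β(L) + L²)ⁿ = 0`. -/
theorem triangulable_implies_nilpotent {m n : ℕ}
    (Ls : Fin m → Matrix (Fin n) (Fin n) (ZMod 2))
    (L : Matrix (Fin n) (Fin n) (MvPolynomial (Fin m) (ZMod 2)))
    (hL : L = ∑ i : Fin m, (X i : MvPolynomial (Fin m) (ZMod 2)) • (Ls i).map C)
    (N : Matrix (Fin n) (Fin n) (ZMod 2)) (hN : IsUnit N)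
    (htri : ∀ i, (N⁻¹ * Ls i * N).BlockTriangular id) :
    (L.map bockstein + L * L) ^ n = 0 := by
  have hdet : IsUnit N.det := (Matrix.isUnit_iff_isUnit_det N).1 hN
  have hβ : L.map bockstein =
      ∑ i : Fin m, (X i ^ 2 : MvPolynomial (Fin m) (ZMod 2)) • (Ls i).map (C (σ := Fin m)) := by
    ext1 j k
    rw [Matrix.map_apply, hL, Matrix.sum_apply, Matrix.sum_apply]
    exact bockstein_lin fun i => Ls i j k
  have hS := tri_case _ htri
  set P : Matrix (Fin n) (Fin n) (MvPolynomial (Fin m) (ZMod 2)) := N.map (C (σ := Fin m)) with hP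
  set Q : Matrix (Fin n) (Fin n) (MvPolynomial (Fin m) (ZMod 2)) := N⁻¹.map (C (σ := Fin m)) with hQ
  have hPQ : P * Q = 1 := by
    rw [hP, hQ, ← Matrix.map_mul, Matrix.mul_nonsing_inv _ hdet]
    exact Matrix.map_one _ (map_zero _) (map_one _)
  have hQP : Q * P = 1 := by
    rw [hP, hQ, ← Matrix.map_mul, Matrix.nonsing_inv_mul _ hdet]
    exact Matrix.map_one _ (map_zero _) (map_one _)
  have hconj : ∀ f : Fin m → MvPolynomial (Fin m) (ZMod 2),
      (∑ i : Fin m, f i • (N⁻¹ * Ls i * N).map (C (σ := Fin m))) = Q * (∑ i, f i • (Ls i).map (C (σ := Fin m))) * P := by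
    intro f
    simp only [Matrix.map_mul, Finset.mul_sum, Finset.sum_mul, Matrix.mul_smul, Matrix.smul_mul]
    rfl
  rw [hconj, hconj, ← hβ, ← hL] at hS
  have h3 : Q * L.map bockstein * P + Q * L * P * (Q * L * P) =
      Q * (L.map bockstein + L * L) * P := by
    have : Q * L * P * (Q * L * P) = Q * L * (P * Q) * L * P := by noncomm_ring
    rw [this, hPQ]
    noncomm_ring
  rw [h3] at hS
  generalize L.map bockstein + L * L = M at hS
  have h4 : ∀ k : ℕ, (Q * M * P) ^ k = Q * M ^ k * P := by
    intro k
    induction k with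
    | zero => simp [hQP]
    | succ k ih =>
      rw [pow_succ, ih, pow_succ]
      calc Q * M ^ k * P * (Q * M * P) = Q * M ^ k * (P * Q) * M * P := by
            simp only [Matrix.mul_assoc]
        _ = _ := by rw [hPQ]; simp only [Matrix.mul_assoc, Matrix.one_mul]
  rw [h4] at hS
  calc M ^ n = (P * Q) * M ^ n * (P * Q) := by rw [hPQ]; simp
    _ = P * (Q * M ^ n * P) * Q := by simp only [Matrix.mul_assoc]
    _ = 0 := by rw [hS]; simp
end

section
/- Let Q : W → V be a quadratic map between nonzero finite-dimensional F₂-vector spaces which is Frattini, i.e., the image of Q spans V. Then for every positive integer k with k ≤ min(dim V, dim W), there exist linearly independent vectors w₁,…,w_k ∈ W such that Q(w₁),…,Q(w_k) are linearly independent in V. -/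
/-- If `Q : W → V` is a Frattini quadratic map between nonzero
finite-dimensional `F₂`-vector spaces, then for every `0 < k ≤ min(dim V, dim W)` there are
linearly independent `w₁,…,w_k` in `W` with `Q(w₁),…,Q(w_k)` linearly independent in `V`. -/
theorem frattini_nice_basis {W V : Type*}
    [AddCommGroup W] [Module (ZMod 2) W] [AddCommGroup V] [Module (ZMod 2) V]
    [FiniteDimensional (ZMod 2) W] [FiniteDimensional (ZMod 2) V]
    [Nontrivial W] [Nontrivial V]
    (Q : W → V) (hQ : IsQuadraticMap Q)
    (hFrat : Submodule.span (ZMod 2) (Set.range Q) = ⊤)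
    (k : ℕ) (hk : 0 < k)
    (hkV : k ≤ Module.finrank (ZMod 2) V) (hkW : k ≤ Module.finrank (ZMod 2) W) :
    ∃ w : Fin k → W, LinearIndependent (ZMod 2) w ∧
      LinearIndependent (ZMod 2) (fun i => Q (w i)) := by
  clear hk
  induction k with
  | zero => exact ⟨Fin.elim0, linearIndependent_empty_type, linearIndependent_empty_type⟩
  | succ m ih =>
    obtain ⟨w, hw, hQw⟩ := ih (by omega) (by omega)
    by_contra hcon
    set P := Submodule.span (ZMod 2) (Set.range w) with hP
    set R := Submodule.span (ZMod 2) (Set.range fun i => Q (w i)) with hR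
    -- outside of `P`, the map `Q` takes values in `R`
    have key : ∀ a, a ∉ P → Q a ∈ R := by
      intro a ha
      by_contra hb
      refine hcon ⟨Fin.snoc w a, hw.finSnoc ha, ?_⟩
      have h := hQw.finSnoc hb
      convert h using 1
      funext i
      refine Fin.lastCases ?_ (fun j => ?_) i <;> simp
    have hPne : ∃ a, a ∉ P := by
      by_contra! hall
      have htop : P = ⊤ := (Submodule.eq_top_iff').2 hall
      have h1 := finrank_span_eq_card hw
      rw [← hP, htop, finrank_top, Fintype.card_fin] at h1
      omega
    obtain ⟨a, ha⟩ := hPne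
    have hadd : ∀ p, p ∈ P → a + p ∉ P := fun p hp h =>
      ha ((Submodule.add_mem_iff_left P hp).1 h)
    have hzero : qpolar Q a 0 = 0 := by
      have := hQ.2 a 0 0
      simpa using this
    have hpol : ∀ p, p ∈ P → qpolar Q a p ∈ R := by
      intro p hp
      induction hp using Submodule.span_induction with
      | mem x hx =>
        obtain ⟨i, rfl⟩ := hx
        exact R.add_mem (R.add_mem (key _ (hadd _ (Submodule.subset_span ⟨i, rfl⟩))) (key a ha))
          (Submodule.subset_span ⟨i, rfl⟩)
      | zero => rw [hzero]; exact R.zero_mem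
      | add x y _ _ hx hy => rw [hQ.2]; exact R.add_mem hx hy
      | smul c x _ hx =>
        have hc : c = 0 ∨ c = 1 := by revert c; decide
        rcases hc with rfl | rfl
        · rw [zero_smul, hzero]; exact R.zero_mem
        · rwa [one_smul]
    have hall : ∀ x, Q x ∈ R := by
      intro x
      by_cases hx : x ∈ P
      · exact (R.add_mem_iff_right (R.add_mem (key _ (hadd x hx)) (key a ha))).1 (hpol x hx)
      · exact key x hx
    have hRtop : R = ⊤ := by
      rw [eq_top_iff, ← hFrat, Submodule.span_le]
      rintro _ ⟨x, rfl⟩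
      exact hall x
    have h1 := finrank_span_eq_card hQw
    rw [← hR, hRtop, finrank_top, Fintype.card_fin] at h1
    omega
end

section
/- Let Q : F₂^m → F₂^n be a quadratic map which is effective, i.e., Q(w) = 0 implies w = 0. Then m ≤ 2n. -/
open MvPolynomial in
lemma quad_poly {m n : ℕ} (Q : (Fin m → ZMod 2) → (Fin n → ZMod 2)) (hQ : IsQuadraticMap Q)
    (j : Fin n) (s : Finset (Fin m)) :
    ∃ p : MvPolynomial (Fin m) (ZMod 2), p.totalDegree ≤ 2 ∧
      ∀ x, eval x p = Q (∑ i ∈ s, Pi.single i (x i)) j := by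
  have hneg : ∀ v : Fin n → ZMod 2, v + v = 0 := fun v => by
    funext i; exact CharTwo.add_self_eq_zero (v i)
  have two : ∀ t : ZMod 2, t = 0 ∨ t = 1 := by decide
  have B0 : ∀ y, qpolar Q y 0 = 0 := fun y => by
    have := hQ.2 y 0 0
    simpa using this
  have Q0 : Q 0 = 0 := by
    have := B0 0
    simpa [qpolar, hneg] using this
  have hadd : ∀ x y, Q (x + y) = Q x + Q y + qpolar Q x y := fun x y => by
    have h1 := hneg (Q x)
    have h2 := hneg (Q y)
    unfold qpolar
    calc Q (x + y) = Q (x + y) + (Q x + Q x) + (Q y + Q y) := by rw [h1, h2]; simp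
      _ = _ := by abel
  induction s using Finset.induction_on with
  | empty => exact ⟨0, by simp, by simp [Q0]⟩
  | insert a s ha ih =>
    obtain ⟨p, hp, hpe⟩ := ih
    refine ⟨p + (X a * C (Q (Pi.single a 1) j) +
      ∑ i ∈ s, X a * X i * C (qpolar Q (Pi.single a 1) (Pi.single i 1) j)), ?_, ?_⟩
    · refine (totalDegree_add _ _).trans (max_le hp ((totalDegree_add _ _).trans (max_le ?_ ?_)))
      · refine (totalDegree_mul _ _).trans ?_
        simp
      · refine totalDegree_finsetSum_le fun i _ => ?_
        refine (totalDegree_mul _ _).trans ?_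
        have := totalDegree_mul (X a : MvPolynomial (Fin m) (ZMod 2)) (X i)
        simp at this ⊢
        omega
    · intro x
      rw [Finset.sum_insert ha]
      simp only [map_add, map_sum, map_mul, eval_X, eval_C, hpe]
      rcases two (x a) with h | h
      · simp [h]
      · rw [h, hadd]
        let f : (Fin m → ZMod 2) →+ (Fin n → ZMod 2) :=
          { toFun := qpolar Q (Pi.single a 1), map_zero' := B0 _, map_add' := hQ.2 _ }
        have hf : qpolar Q (Pi.single a 1) (∑ i ∈ s, Pi.single i (x i)) =
            ∑ i ∈ s, qpolar Q (Pi.single a 1) (Pi.single i (x i)) := map_sum f _ _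
        rw [hf]
        have : ∀ i, qpolar Q (Pi.single a 1) (Pi.single i (x i)) j =
            x i * qpolar Q (Pi.single a 1) (Pi.single i 1) j := fun i => by
          rcases two (x i) with h | h <;> simp [h, B0]
        simp only [Pi.add_apply, Finset.sum_apply, this, one_mul]
        ring

/-- An effective quadratic map `Q : F₂^m → F₂^n` forces `m ≤ 2n`. -/
theorem effective_implies_dim_bound {m n : ℕ}
    (Q : (Fin m → ZMod 2) → (Fin n → ZMod 2)) (hQ : IsQuadraticMap Q)
    (heff : ∀ w, Q w = 0 → w = 0) :
    m ≤ 2 * n := by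
  by_contra hlt
  push Not at hlt
  choose p hp hpe using fun j => quad_poly Q hQ j Finset.univ
  simp only [Finset.univ_sum_single] at hpe
  have hsum : ∑ j, (p j).totalDegree < Fintype.card (Fin m) := by
    refine (Finset.sum_le_sum fun j _ => hp j).trans_lt ?_
    simp
    omega
  have key := char_dvd_card_solutions_of_fintype_sum_lt 2 hsum
  have hQ0 : Q 0 = 0 := by
    have := hQ.2 0 0 0
    have h2 : Q 0 + Q 0 = 0 := by
      funext i; exact CharTwo.add_self_eq_zero (Q 0 i)
    simpa [qpolar, h2] using this
  have : Fintype.card { x : Fin m → ZMod 2 // ∀ i, MvPolynomial.eval x (p i) = 0 } = 1 := by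
    rw [Fintype.card_eq_one_iff]
    refine ⟨⟨0, fun i => by rw [hpe, hQ0]; rfl⟩, fun ⟨y, hy⟩ => Subtype.ext (heff y ?_)⟩
    funext i
    rw [← hpe, hy]; rfl
  have h21 : 2 ∣ 1 := by
    rw [← this]
    convert! key
  omega
end

section
/- Let Q : F₂^n → F₂^n be a quadratic map which is Bockstein closed, effective (Q(w) = 0 implies w = 0), and Frattini (the image of Q spans F₂^n), with associated quadratic polynomials q₁,…,q_n ∈ F₂[x₁,…,x_n], regarded as a column vector q. If L₁ and L₂ are n×n matrices over F₂[x₁,…,x_n] whose entries are homogeneous linear forms and β(q) = L₁q and β(q) = L₂q (with β applied entrywise), then L₁ = L₂. -/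
open MvPolynomial

lemma bmu_coeff_mem {ι : Type*} [Fintype ι] (Q : ℕ)
    (a : ι → MvPolynomial ι (ZMod 2)) (h : ∑ j, X j ^ Q * a j = 0) (k : ι) :
    a k ∈ Ideal.span (Set.range fun j : ι => (X j : MvPolynomial ι (ZMod 2)) ^ Q) := by
  classical
  have e : (Set.range fun j : ι => (X j : MvPolynomial ι (ZMod 2)) ^ Q)
      = (fun s => monomial s (1 : ZMod 2)) '' (Set.range fun j : ι => Finsupp.single j Q) := by
    rw [← Set.range_comp]
    congr 1
    funext j
    simp [X_pow_eq_monomial]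
  rw [e, mem_ideal_span_monomial_image]
  intro u hu
  by_contra hcon
  push Not at hcon
  have hlt : ∀ j, u j < Q := by
    intro j
    by_contra hj
    exact hcon _ ⟨j, rfl⟩ (by simpa using hj)
  have hc := congrArg (coeff (u + Finsupp.single k Q)) h
  rw [coeff_sum, Finset.sum_eq_single k] at hc
  · rw [X_pow_eq_monomial, add_comm, coeff_monomial_mul] at hc
    simp at hc
    exact (mem_support_iff.1 hu) hc
  · intro j _ hj
    rw [X_pow_eq_monomial, coeff_monomial_mul', if_neg]
    intro hle
    have := hle j
    simp [hj.symm] at this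
    exact absurd (hlt j) (by omega)
  · simp

lemma bmu_capture {ι : Type*} [Fintype ι] {S : Type*} [CommRing S] [CharP S 2]
    (f : MvPolynomial ι (ZMod 2) →+* S) (hfin : f.Finite) (m : ι → S)
    (h : ∑ j, f (X j) * m j = 0) :
    ∃ c : MvPolynomial ι (ZMod 2), c ≠ 0 ∧ ∀ (e : ℕ) (k : ι), f c * m k ^ (2 ^ e) ∈
      Ideal.span (Set.range fun j : ι => f (X j) ^ (2 ^ e)) := by
  classical
  let _ := f.toAlgebra
  have hfin' : Module.Finite (MvPolynomial ι (ZMod 2)) S := hfin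
  obtain ⟨G, hG⟩ := hfin'.fg_top
  obtain ⟨s, hs, hmax⟩ := exists_maximal_linearIndepOn (MvPolynomial ι (ZMod 2))
    (fun g : G => (g : S))
  have hex : ∀ g : G, ∃ a : MvPolynomial ι (ZMod 2), a ≠ 0 ∧
      a • (g : S) ∈ Submodule.span (MvPolynomial ι (ZMod 2)) ((fun g : G => (g : S)) '' s) := by
    intro g
    by_cases hg : g ∈ s
    · exact ⟨1, one_ne_zero, by rw [one_smul]; exact Submodule.subset_span ⟨g, hg, rfl⟩⟩
    · exact hmax g hg
  choose a ha0 ha using hex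
  refine ⟨∏ g, a g, Finset.prod_ne_zero_iff.2 fun g _ => ha0 g, ?_⟩
  set c := ∏ g, a g with hc
  have hcS : ∀ x : S, c • x ∈
      Submodule.span (MvPolynomial ι (ZMod 2)) ((fun g : G => (g : S)) '' s) := by
    intro x
    have hx : x ∈ Submodule.span (MvPolynomial ι (ZMod 2)) (G : Set S) := by rw [hG]; trivial
    induction hx using Submodule.span_induction with
    | mem x hx =>
      have : c = (∏ g ∈ Finset.univ.erase ⟨x, hx⟩, a g) * a ⟨x, hx⟩ := by
        rw [hc, Finset.prod_erase_mul _ _ (Finset.mem_univ _)]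
      rw [this, mul_smul]
      exact Submodule.smul_mem _ _ (ha ⟨x, hx⟩)
    | zero => simp
    | add x y _ _ hx hy => rw [smul_add]; exact Submodule.add_mem _ hx hy
    | smul r x _ hx => rw [smul_comm]; exact Submodule.smul_mem _ _ hx
  intro e k
  have hs' : LinearIndependent (MvPolynomial ι (ZMod 2)) (fun g : s => ((g : G) : S)) := hs
  have hrange : ((fun g : G => (g : S)) '' s) = Set.range (fun g : s => ((g : G) : S)) := by
    ext x; simp
  have hrep : ∀ j, ∃ b : s → MvPolynomial ι (ZMod 2),
      ∑ g, b g • ((g : G) : S) = c • m j ^ (2 ^ e) := by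
    intro j
    have := hcS (m j ^ (2 ^ e))
    rw [hrange] at this
    exact (Submodule.mem_span_range_iff_exists_fun _).1 this
  choose b hb using hrep
  have hsm : ∀ (p : MvPolynomial ι (ZMod 2)) (x : S), p • x = f p * x := fun p x => rfl
  have h2 : ∑ j, f (X j) ^ (2 ^ e) * m j ^ (2 ^ e) = 0 := by
    have := congrArg (fun x => x ^ (2 ^ e)) h
    simp only [sum_pow_char_pow] at this
    simpa [mul_pow] using this
  have h3 : ∑ g : s, (∑ j, X j ^ (2 ^ e) * b j g) • ((g : G) : S) = 0 := by
    have : ∑ j, (X j ^ (2 ^ e) : MvPolynomial ι (ZMod 2)) • (∑ g, b j g • ((g : G) : S)) = 0 := by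
      simp_rw [hb, smul_comm _ c]
      rw [← Finset.smul_sum]
      simp_rw [hsm, map_pow]
      rw [h2, mul_zero]
    rw [← this]
    simp_rw [Finset.sum_smul, Finset.smul_sum, mul_smul]
    exact Finset.sum_comm
  have h4 := Fintype.linearIndependent_iff.1 hs' _ h3
  have h5 : f c * m k ^ (2 ^ e) = ∑ g, f (b k g) * ((g : G) : S) := (hb k).symm
  rw [h5]
  refine Ideal.sum_mem _ fun g _ => Ideal.mul_mem_right _ _ ?_
  have h6 := Ideal.mem_map_of_mem f (bmu_coeff_mem (2 ^ e) (fun j => b j g) (h4 g) k)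
  rw [Ideal.map_span, ← Set.range_comp] at h6
  convert h6 using 3
  funext j
  simp

lemma bmu_order_aux {σ ι : Type*} (d : ℕ) (p : ι → MvPolynomial σ (ZMod 2))
    (hp : ∀ j, (p j).IsHomogeneous d) (f : MvPolynomial σ (ZMod 2))
    (hf : f ∈ Ideal.span (Set.range p)) : ∀ u : σ →₀ ℕ, u.degree < d → coeff u f = 0 := by
  classical
  induction hf using Submodule.span_induction with
  | mem x hx =>
    obtain ⟨j, rfl⟩ := hx
    intro u hu
    exact (hp j).coeff_eq_zero (by simpa using hu.ne)
  | zero => simp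
  | add x y _ _ hx hy => intro u hu; rw [coeff_add, hx u hu, hy u hu, add_zero]
  | smul r x _ hx =>
    intro u hu
    rw [smul_eq_mul, coeff_mul]
    refine Finset.sum_eq_zero fun v hv => ?_
    rw [Finset.HasAntidiagonal.mem_antidiagonal] at hv
    rw [hx v.2, mul_zero]
    have : v.1.degree + v.2.degree = u.degree := by rw [← hv, map_add]
    omega

lemma bmu_order {σ ι : Type*} (d : ℕ) (p : ι → MvPolynomial σ (ZMod 2))
    (hp : ∀ j, (p j).IsHomogeneous d) (f : MvPolynomial σ (ZMod 2))
    (hf : f ∈ Ideal.span (Set.range p)) (hd : f.totalDegree < d) : f = 0 := by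
  ext u
  rw [coeff_zero]
  by_contra hne
  refine hne (bmu_order_aux d p hp f hf u (lt_of_le_of_lt ?_ hd))
  exact le_totalDegree (mem_support_iff.2 hne)

lemma bmu_hc_mul {σ : Type*} (e d : ℕ) (h q : MvPolynomial σ (ZMod 2)) (hq : q.IsHomogeneous d) :
    homogeneousComponent (e + d) (h * q) = homogeneousComponent e h * q := by
  conv_lhs => rw [← sum_homogeneousComponent h]
  rw [Finset.sum_mul, map_sum]
  have : ∀ i, homogeneousComponent (e + d) (homogeneousComponent i h * q) =
      if i = e then homogeneousComponent i h * q else 0 := by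
    intro i
    rw [homogeneousComponent_of_mem (m := e + d) (n := i + d)
      ((homogeneousComponent_isHomogeneous i h).mul hq)]
    by_cases hie : i = e
    · simp [hie]
    · rw [if_neg (by omega), if_neg hie]
  simp_rw [this]
  rw [Finset.sum_ite_eq' ]
  split_ifs with hmem
  · rfl
  · rw [homogeneousComponent_eq_zero, zero_mul]
    simpa [Nat.lt_succ_iff] using hmem

lemma bmu_finite {σ ι : Type*} [Fintype σ] [Fintype ι] (q : ι → MvPolynomial σ (ZMod 2))
    (hq : ∀ j, (q j).IsHomogeneous 2)
    (hrad : ∀ i, X i ∈ (Ideal.span (Set.range q)).radical) :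
    (aeval q : MvPolynomial ι (ZMod 2) →ₐ[ZMod 2] MvPolynomial σ (ZMod 2)).toRingHom.Finite := by
  classical
  have h1 : ∀ i, ∃ (e : ℕ) (h : ι → MvPolynomial σ (ZMod 2)), (∀ j, (h j).IsHomogeneous e) ∧
      X i ^ (e + 2) = ∑ j, h j * q j := by
    intro i
    obtain ⟨e, he⟩ := hrad i
    have he2 : (X i : MvPolynomial σ (ZMod 2)) ^ (e + 2) ∈ Ideal.span (Set.range q) := by
      rw [pow_add]; exact Ideal.mul_mem_right _ _ he
    obtain ⟨h, hh⟩ := Ideal.mem_span_range_iff_exists_fun.1 he2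
    refine ⟨e, fun j => homogeneousComponent e (h j), fun j =>
      homogeneousComponent_isHomogeneous _ _, ?_⟩
    have := congrArg (homogeneousComponent (e + 2)) hh
    rw [map_sum, homogeneousComponent_eq_self (isHomogeneous_X_pow i _)] at this
    rw [← this]
    exact Finset.sum_congr rfl fun j _ => bmu_hc_mul e 2 _ _ (hq j)
  choose e h hh hX using h1
  let f := (aeval q : MvPolynomial ι (ZMod 2) →ₐ[ZMod 2] MvPolynomial σ (ZMod 2)).toRingHom
  let _ := f.toAlgebra
  have hsm : ∀ (p : MvPolynomial ι (ZMod 2)) (x : MvPolynomial σ (ZMod 2)),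
    p • x = aeval q p * x := fun p x => rfl
  let bd : σ →₀ ℕ := Finsupp.equivFunOnFinite.symm fun i => e i + 2
  let T : Submodule (MvPolynomial ι (ZMod 2)) (MvPolynomial σ (ZMod 2)) :=
    Submodule.span _ ((fun u => monomial u (1 : ZMod 2)) '' Set.Iic bd)
  have hT : ∀ (d : ℕ) (u : σ →₀ ℕ), u.degree = d → monomial u (1 : ZMod 2) ∈ T := by
    intro d
    induction d using Nat.strong_induction_on with
    | _ d ih =>
      intro u hu
      by_cases hle : u ≤ bd
      · exact Submodule.subset_span ⟨u, hle, rfl⟩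
      · obtain ⟨i, hi⟩ : ∃ i, e i + 2 < u i := by
          by_contra hcon
          push Not at hcon
          exact hle fun i => hcon i
        obtain ⟨u', hu'⟩ : ∃ u', u = Finsupp.single i (e i + 2) + u' :=
          exists_add_of_le (Finsupp.single_le_iff.2 hi.le)
        have hmon : monomial u (1 : ZMod 2) = ∑ j, (X j : MvPolynomial ι (ZMod 2)) •
            (h i j * monomial u' (1 : ZMod 2)) := by
          have : monomial u (1 : ZMod 2) = X i ^ (e i + 2) * monomial u' 1 := by
            rw [X_pow_eq_monomial, monomial_mul, hu', one_mul]
          rw [this, hX, Finset.sum_mul]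
          refine Finset.sum_congr rfl fun j _ => ?_
          rw [hsm, aeval_X]; ring
        rw [hmon]
        refine Submodule.sum_mem _ fun j _ => Submodule.smul_mem _ _ ?_
        have hhom : (h i j * monomial u' (1 : ZMod 2)).IsHomogeneous (e i + u'.degree) :=
          (hh i j).mul (isHomogeneous_monomial _ rfl)
        rw [(h i j * monomial u' (1 : ZMod 2)).as_sum]
        refine Submodule.sum_mem _ fun v hv => ?_
        have hv1 : v.degree = e i + u'.degree := by
          by_contra hne
          exact (mem_support_iff.1 hv) (hhom.coeff_eq_zero hne)
        have hud : u.degree = e i + 2 + u'.degree := by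
          rw [hu', map_add, Finsupp.degree_single]
        have := ih v.degree (by omega) v rfl
        have h3 : monomial v (coeff v (h i j * monomial u' (1 : ZMod 2))) =
            (C (coeff v (h i j * monomial u' (1 : ZMod 2))) : MvPolynomial ι (ZMod 2)) •
              monomial v (1 : ZMod 2) := by
          rw [hsm, aeval_C, algebraMap_eq, C_mul_monomial, mul_one]
        rw [h3]
        exact Submodule.smul_mem _ _ this
  suffices hfin : Module.Finite (MvPolynomial ι (ZMod 2)) (MvPolynomial σ (ZMod 2)) from hfin
  refine ⟨⟨((Set.finite_Iic bd).image (fun u => monomial u (1 : ZMod 2))).toFinset, ?_⟩⟩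
  rw [Set.Finite.coe_toFinset, eq_top_iff]
  intro p _
  change p ∈ T
  rw [p.as_sum]
  refine Submodule.sum_mem _ fun v hv => ?_
  have h3 : monomial v (coeff v p) =
      (C (coeff v p) : MvPolynomial ι (ZMod 2)) • monomial v (1 : ZMod 2) := by
    rw [hsm, aeval_C, algebraMap_eq, C_mul_monomial, mul_one]
  rw [h3]
  exact Submodule.smul_mem _ _ (hT _ v rfl)

lemma bmu_injective {n : ℕ} (q : Fin n → MvPolynomial (Fin n) (ZMod 2))
    (hfin : (aeval q : MvPolynomial (Fin n) (ZMod 2) →ₐ[ZMod 2]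
      MvPolynomial (Fin n) (ZMod 2)).toRingHom.Finite) :
    Function.Injective (aeval q : MvPolynomial (Fin n) (ZMod 2) →ₐ[ZMod 2]
      MvPolynomial (Fin n) (ZMod 2)) := by
  have hint := hfin.to_isIntegral
  have halg : Algebra.IsIntegral (Algebra.adjoin (ZMod 2) (Set.range q))
      (MvPolynomial (Fin n) (ZMod 2)) := by
    constructor
    have hmem : ∀ p : MvPolynomial (Fin n) (ZMod 2), aeval q p ∈ Algebra.adjoin (ZMod 2) (Set.range q) := by
      intro p
      rw [Algebra.adjoin_range_eq_range_aeval]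
      exact ⟨p, rfl⟩
    let g := (aeval q : MvPolynomial (Fin n) (ZMod 2) →ₐ[ZMod 2]
      MvPolynomial (Fin n) (ZMod 2)).codRestrict _ hmem
    exact RingHom.IsIntegral.tower_top g.toRingHom
      (algebraMap (Algebra.adjoin (ZMod 2) (Set.range q)) (MvPolynomial (Fin n) (ZMod 2))) hint
  have := Algebra.IsAlgebraic.isTranscendenceBasis_of_lift_le_trdeg_of_finite (ZMod 2) q
    (by rw [MvPolynomial.trdeg_of_isDomain]; simp)
  exact this.1

lemma bmu_main {n : ℕ} (q : Fin n → MvPolynomial (Fin n) (ZMod 2))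
    (hq : ∀ j, (q j).IsHomogeneous 2)
    (hrad : ∀ i, X i ∈ (Ideal.span (Set.range q)).radical)
    (m : Fin n → MvPolynomial (Fin n) (ZMod 2)) (hm : ∀ j, (m j).IsHomogeneous 1)
    (h : ∑ j, m j * q j = 0) (k : Fin n) : m k = 0 := by
  have hfin := bmu_finite q hq hrad
  have hinj := bmu_injective q hfin
  obtain ⟨c, hc0, hc⟩ := bmu_capture _ hfin m (by
    rw [← h]
    refine Finset.sum_congr rfl fun j _ => ?_
    simp [mul_comm])
  simp only [AlgHom.toRingHom_eq_coe, RingHom.coe_coe, aeval_X] at hc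
  have hc1 : aeval q c ≠ 0 := fun h0 => hc0 (hinj (by rw [h0, map_zero]))
  let e := (aeval q c).totalDegree
  have hlt : e < 2 ^ e := Nat.lt_two_pow_self
  have hz := bmu_order (2 * 2 ^ e) (fun j => q j ^ 2 ^ e)
    (fun j => (hq j).pow _) _ (hc e k) (by
      have h1 := totalDegree_mul (aeval q c) (m k ^ 2 ^ e)
      have h2 := totalDegree_pow (m k) (2 ^ e)
      have h3 := Nat.mul_le_mul_left (2 ^ e) (hm k).totalDegree_le
      change _ ≤ e + _ at h1
      omega)
  exact eq_zero_of_pow_eq_zero ((mul_eq_zero.1 hz).resolve_left hc1)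

/-- The bilinear form with matrix `b`. -/
noncomputable def bmuP {n : ℕ} {K : Type*} [CommRing K] [Algebra (ZMod 2) K]
    (b : Fin n → Fin n → ZMod 2) (x y : Fin n → K) : K :=
  ∑ i, ∑ j, algebraMap (ZMod 2) K (b i j) * x i * y j

section
variable {n : ℕ} {K : Type*} [CommRing K] [Algebra (ZMod 2) K]

lemma bmuP_add_left (b : Fin n → Fin n → ZMod 2) (x y z : Fin n → K) :
    bmuP b (x + y) z = bmuP b x z + bmuP b y z := by
  simp only [bmuP, ← Finset.sum_add_distrib, Pi.add_apply]
  refine Finset.sum_congr rfl fun i _ => Finset.sum_congr rfl fun j _ => by ring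

lemma bmuP_add_right (b : Fin n → Fin n → ZMod 2) (x y z : Fin n → K) :
    bmuP b x (y + z) = bmuP b x y + bmuP b x z := by
  simp only [bmuP, ← Finset.sum_add_distrib, Pi.add_apply]
  refine Finset.sum_congr rfl fun i _ => Finset.sum_congr rfl fun j _ => by ring

lemma bmuP_zero_left (b : Fin n → Fin n → ZMod 2) (z : Fin n → K) :
    bmuP b 0 z = 0 := by
  simp [bmuP]

lemma bmuP_frob [CharP K 2] (b : Fin n → Fin n → ZMod 2) (x y : Fin n → K) (e : ℕ) :
    bmuP b (fun l => x l ^ 2 ^ e) (fun l => y l ^ 2 ^ e) = bmuP b x y ^ 2 ^ e := by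
  have hb : ∀ a : ZMod 2, a ^ 2 ^ e = a := fun a => ZMod.pow_card_pow a
  simp only [bmuP, sum_pow_char_pow, mul_pow, ← map_pow, hb]

lemma bmu_sum_split (g : Fin n → Fin n → K) (hg : ∀ i, g i i = 0) :
    ∑ i, ∑ j, g i j = ∑ i, ∑ j, if i < j then g i j + g j i else 0 := by
  have h1 : ∀ i j, g i j = (if i < j then g i j else 0) + (if j < i then g i j else 0) := by
    intro i j
    rcases lt_trichotomy i j with h | h | h
    · simp [h, not_lt.2 h.le]
    · subst h; simp [hg]
    · simp [h, not_lt.2 h.le]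
  have h2 : ∀ i j, (if i < j then g i j + g j i else 0) =
      (if i < j then g i j else 0) + (if i < j then g j i else 0) := by
    intro i j; split_ifs <;> simp
  calc ∑ i, ∑ j, g i j
      = ∑ i, ∑ j, ((if i < j then g i j else 0) + (if j < i then g i j else 0)) :=
        Finset.sum_congr rfl fun i _ => Finset.sum_congr rfl fun j _ => h1 i j
    _ = ∑ i, ∑ j, (if i < j then g i j else 0) + ∑ i, ∑ j, (if j < i then g i j else 0) := by
        simp only [Finset.sum_add_distrib]
    _ = ∑ i, ∑ j, (if i < j then g i j else 0) + ∑ i, ∑ j, (if i < j then g j i else 0) := by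
        rw [Finset.sum_comm (f := fun i j => if j < i then g i j else 0)]
    _ = _ := by simp only [h2, Finset.sum_add_distrib]

/-- the polarization matrix -/
def bmuB (Q : (Fin n → ZMod 2) → (Fin n → ZMod 2)) (k : Fin n) (i j : Fin n) : ZMod 2 :=
  qpolar Q (Pi.single i 1) (Pi.single j 1) k

lemma bmuB_symm (Q : (Fin n → ZMod 2) → (Fin n → ZMod 2)) (k i j : Fin n) :
    bmuB Q k i j = bmuB Q k j i := by
  simp only [bmuB, qpolar, Pi.add_apply]
  rw [add_comm (Pi.single i 1) (Pi.single j 1)]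
  ring

lemma bmu_Q_zero (Q : (Fin n → ZMod 2) → (Fin n → ZMod 2)) (hQ : IsQuadraticMap Q) :
    Q 0 = 0 := by
  have h := hQ.1 0 0 0
  have h2 : ∀ v : Fin n → ZMod 2, v + v = 0 := fun v => by funext i; exact CharTwo.add_self_eq_zero _
  simp only [qpolar, add_zero, h2, zero_add] at h
  exact h

lemma bmuB_self (Q : (Fin n → ZMod 2) → (Fin n → ZMod 2)) (hQ : IsQuadraticMap Q) (k i : Fin n) :
    bmuB Q k i i = 0 := by
  have h2 : ∀ v : Fin n → ZMod 2, v + v = 0 := fun v => by funext i; exact CharTwo.add_self_eq_zero _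
  simp only [bmuB, qpolar, h2, bmu_Q_zero Q hQ, zero_add, Pi.zero_apply]

lemma bmu_aeval (Q : (Fin n → ZMod 2) → (Fin n → ZMod 2)) (k : Fin n) (x : Fin n → K) :
    aeval x (assocPoly Q k) = ∑ i, algebraMap (ZMod 2) K (Q (Pi.single i 1) k) * x i ^ 2 +
      ∑ i, ∑ j, if i < j then algebraMap (ZMod 2) K (bmuB Q k i j) * x i * x j else 0 := by
  simp only [assocPoly, map_add, map_sum, map_mul, map_pow, aeval_X, aeval_C, apply_ite (aeval x),
    map_zero, bmuB]

lemma bmu_aeval_add [CharP K 2] (Q : (Fin n → ZMod 2) → (Fin n → ZMod 2)) (hQ : IsQuadraticMap Q)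
    (k : Fin n) (x y : Fin n → K) :
    aeval (x + y) (assocPoly Q k) = aeval x (assocPoly Q k) + aeval y (assocPoly Q k) +
      bmuP (bmuB Q k) x y := by
  have h2 : bmuP (bmuB Q k) x y = ∑ i, ∑ j, if i < j then
      algebraMap (ZMod 2) K (bmuB Q k i j) * x i * y j +
      algebraMap (ZMod 2) K (bmuB Q k i j) * x j * y i else 0 := by
    rw [bmuP, bmu_sum_split]
    · refine Finset.sum_congr rfl fun i _ => Finset.sum_congr rfl fun j _ => ?_
      rw [bmuB_symm Q k j i]
    · intro i; simp [bmuB_self Q hQ]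
  have h3 : ∀ i, algebraMap (ZMod 2) K (Q (Pi.single i 1) k) * (x + y) i ^ 2 =
      algebraMap (ZMod 2) K (Q (Pi.single i 1) k) * x i ^ 2 +
      algebraMap (ZMod 2) K (Q (Pi.single i 1) k) * y i ^ 2 := by
    intro i
    rw [Pi.add_apply, add_pow_char, mul_add]
  have h4 : ∀ i j, (if i < j then
      algebraMap (ZMod 2) K (bmuB Q k i j) * (x + y) i * (x + y) j else 0) =
      (if i < j then algebraMap (ZMod 2) K (bmuB Q k i j) * x i * x j else 0) +
      (if i < j then algebraMap (ZMod 2) K (bmuB Q k i j) * y i * y j else 0) +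
      (if i < j then algebraMap (ZMod 2) K (bmuB Q k i j) * x i * y j +
      algebraMap (ZMod 2) K (bmuB Q k i j) * x j * y i else 0) := by
    intro i j
    split_ifs
    · simp only [Pi.add_apply]; ring
    · simp
  rw [h2]
  simp only [bmu_aeval, h3, h4, Finset.sum_add_distrib]
  ring

lemma bmu_aeval_smul (Q : (Fin n → ZMod 2) → (Fin n → ZMod 2))
    (k : Fin n) (a : K) (x : Fin n → K) :
    aeval (fun l => a * x l) (assocPoly Q k) = a ^ 2 * aeval x (assocPoly Q k) := by
  simp only [bmu_aeval, mul_add, Finset.mul_sum, mul_ite, mul_zero]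
  congr 1
  · exact Finset.sum_congr rfl fun i _ => by ring
  · refine Finset.sum_congr rfl fun i _ => Finset.sum_congr rfl fun j _ => ?_
    congr 1
    ring

lemma bmu_aeval_frob [CharP K 2] (p : MvPolynomial (Fin n) (ZMod 2)) (x : Fin n → K) (e : ℕ) :
    aeval (fun l => x l ^ 2 ^ e) p = aeval x p ^ 2 ^ e := by
  have hb : ∀ a : ZMod 2, a ^ 2 ^ e = a := fun a => ZMod.pow_card_pow a
  induction p using MvPolynomial.induction_on with
  | C a => rw [aeval_C, aeval_C, ← map_pow, hb]
  | add p q hp hq => rw [map_add, map_add, hp, hq, add_pow_char_pow]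
  | mul_X p i hp => rw [map_mul, map_mul, hp, aeval_X, aeval_X, mul_pow]

lemma bmu_bock [CharP K 2] (Q : (Fin n → ZMod 2) → (Fin n → ZMod 2)) (hQ : IsQuadraticMap Q)
    (k : Fin n) (x : Fin n → K) :
    aeval x (bockstein (assocPoly Q k)) = bmuP (bmuB Q k) x (fun l => x l ^ 2) := by
  classical
  let D : Derivation (ZMod 2) (MvPolynomial (Fin n) (ZMod 2)) (MvPolynomial (Fin n) (ZMod 2)) :=
    mkDerivation (ZMod 2) fun i => X i ^ 2
  have hD : ∀ f, bockstein f = D f := by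
    intro f
    have : D = ∑ i : Fin n, (X i ^ 2 : MvPolynomial (Fin n) (ZMod 2)) • pderiv i := by
      refine MvPolynomial.derivation_ext fun j => ?_
      rw [mkDerivation_X, ← Derivation.coeFnAddMonoidHom_apply, map_sum, Finset.sum_apply,
        Finset.sum_eq_single j]
      · simp
      · intro i _ hi
        simp [pderiv_X_of_ne hi.symm]
      · simp
    rw [this, ← Derivation.coeFnAddMonoidHom_apply, map_sum, Finset.sum_apply]
    rfl
  have hDX : ∀ i, D (X i) = X i ^ 2 := fun i => mkDerivation_X _ _ _
  have hDC : ∀ a, D (C a) = 0 := fun a => D.map_algebraMap a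
  have h2 : bmuP (bmuB Q k) x (fun l => x l ^ 2) = ∑ i, ∑ j, if i < j then
      algebraMap (ZMod 2) K (bmuB Q k i j) * (x i * x j ^ 2 + x j * x i ^ 2) else 0 := by
    rw [bmuP, bmu_sum_split]
    · refine Finset.sum_congr rfl fun i _ => Finset.sum_congr rfl fun j _ => ?_
      rw [bmuB_symm Q k j i]
      congr 1
      ring
    · intro i; simp [bmuB_self Q hQ]
  have h20 : (2 : MvPolynomial (Fin n) (ZMod 2)) = 0 := CharTwo.two_eq_zero
  rw [hD, h2, assocPoly, map_add, map_sum, map_sum]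
  have h3 : ∀ i, D (C (Q (Pi.single i 1) k) * X i ^ 2) = 0 := by
    intro i
    rw [Derivation.leibniz, hDC, sq, Derivation.leibniz, smul_zero, add_zero, CharTwo.add_self_eq_zero,
      smul_zero]
  simp only [h3, Finset.sum_const_zero, zero_add, map_sum]
  refine Finset.sum_congr rfl fun i _ => Finset.sum_congr rfl fun j _ => ?_
  split_ifs
  · rw [Derivation.leibniz, Derivation.leibniz, hDC, hDX, hDX]
    simp only [smul_eq_mul, map_add, map_mul, aeval_C, aeval_X, map_pow, mul_zero, add_zero, bmuB]
    ring
  · simp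
end

lemma bmu_ind {n : ℕ} {p : (Fin n → ZMod 2) → Prop} (h0 : p 0)
    (hadd : ∀ x i, p x → p (x + Pi.single i 1)) (x : Fin n → ZMod 2) : p x := by
  classical
  rw [← Finset.univ_sum_single x]
  induction (Finset.univ : Finset (Fin n)) using Finset.induction_on with
  | empty => simpa using h0
  | insert i s hi ih =>
    rw [Finset.sum_insert hi, add_comm]
    have : ∀ a : ZMod 2, a = 0 ∨ a = 1 := by decide
    rcases this (x i) with h | h
    · rw [h]; simpa using ih
    · rw [h]; exact hadd _ _ ih

lemma bmu_aeval_eq {n : ℕ} (Q : (Fin n → ZMod 2) → (Fin n → ZMod 2)) (hQ : IsQuadraticMap Q)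
    (k : Fin n) (w : Fin n → ZMod 2) : aeval w (assocPoly Q k) = Q w k := by
  have hP : ∀ i x, bmuP (bmuB Q k) x (Pi.single i 1) = qpolar Q x (Pi.single i 1) k := by
    intro i x
    induction x using bmu_ind with
    | h0 => rw [bmuP_zero_left]; simp [qpolar, bmu_Q_zero Q hQ, CharTwo.add_self_eq_zero]
    | hadd x j ih =>
      rw [bmuP_add_left, hQ.1, Pi.add_apply, ih]
      congr 1
      simp [bmuP, bmuB, Pi.single_apply]
  have hE : ∀ i, aeval (Pi.single i 1 : Fin n → ZMod 2) (assocPoly Q k) = Q (Pi.single i 1) k := by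
    intro i
    rw [bmu_aeval]
    have h1 : ∀ a b, (if a < b then algebraMap (ZMod 2) (ZMod 2) (bmuB Q k a b) *
        (Pi.single i 1 : Fin n → ZMod 2) a * (Pi.single i 1 : Fin n → ZMod 2) b else 0) = 0 := by
      intro a b
      split_ifs with hab
      · by_cases ha : a = i
        · have hb : b ≠ i := by rintro rfl; exact hab.ne ha
          simp [hb]
        · simp [ha]
      · rfl
    simp only [h1, Finset.sum_const_zero]
    simp [Pi.single_apply]
  induction w using bmu_ind with
  | h0 => rw [bmu_Q_zero Q hQ, bmu_aeval]; simp
  | hadd x i ih =>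
    rw [bmu_aeval_add Q hQ, ih, hE, hP]
    simp only [qpolar, Pi.add_apply]
    have h2 : (2 : ZMod 2) = 0 := rfl
    linear_combination (Q x k + Q (Pi.single i 1) k) * h2

lemma bmu_zero {n : ℕ} {K : Type*} [Field K] [Finite K] [Algebra (ZMod 2) K]
    (Q : (Fin n → ZMod 2) → (Fin n → ZMod 2)) (hQ : IsQuadraticMap Q)
    (hBC : ∀ k : Fin n, bockstein (assocPoly Q k) ∈ Ideal.span (Set.range (assocPoly Q)))
    (heff : ∀ w, Q w = 0 → w = 0) (x : Fin n → K) (hx : ∀ k, aeval x (assocPoly Q k) = 0) :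
    x = 0 := by
  have hchar : CharP K 2 := charP_of_injective_algebraMap (algebraMap (ZMod 2) K).injective 2
  have hB : ∀ y : Fin n → K, (∀ k, aeval y (assocPoly Q k) = 0) → ∀ k,
      bmuP (bmuB Q k) y (fun l => y l ^ 2) = 0 := by
    intro y hy k
    rw [← bmu_bock Q hQ]
    have hle : Ideal.span (Set.range (assocPoly Q)) ≤
        RingHom.ker (aeval y : MvPolynomial (Fin n) (ZMod 2) →ₐ[ZMod 2] K) := by
      rw [Ideal.span_le]
      rintro _ ⟨j, rfl⟩
      exact hy j
    exact hle (hBC k)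
  have hF : ∀ y : Fin n → K, (∀ k, aeval y (assocPoly Q k) = 0) → ∀ e k,
      aeval (fun l => y l ^ 2 ^ e) (assocPoly Q k) = 0 := by
    intro y hy e k
    rw [bmu_aeval_frob, hy, zero_pow (by positivity)]
  have hself : ∀ y : Fin n → K, (∀ k, aeval y (assocPoly Q k) = 0) → ∀ k,
      bmuP (bmuB Q k) y y = 0 := by
    intro y hy k
    have h := bmu_aeval_add Q hQ k y y
    have hyy : y + y = 0 := by funext l; exact CharTwo.add_self_eq_zero _
    rw [hyy, hy, bmu_aeval] at h
    simpa using h.symm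
  have hsymm : ∀ (y z : Fin n → K) k, bmuP (bmuB Q k) y z = bmuP (bmuB Q k) z y := by
    intro y z k
    have h1 := bmu_aeval_add Q hQ k y z
    have h2 := bmu_aeval_add Q hQ k z y
    rw [add_comm z y] at h2
    linear_combination h2 - h1
  have hC : ∀ t, (∀ y : Fin n → K, (∀ k, aeval y (assocPoly Q k) = 0) → ∀ k,
      bmuP (bmuB Q k) y (fun l => y l ^ 2 ^ t) = 0) ∧
      (∀ y : Fin n → K, (∀ k, aeval y (assocPoly Q k) = 0) → ∀ k,
      bmuP (bmuB Q k) y (fun l => y l ^ 2 ^ (t + 1)) = 0) := by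
    intro t
    induction t with
    | zero => exact ⟨by simpa using hself, by simpa using hB⟩
    | succ t ih =>
      refine ⟨ih.2, fun y hy k => ?_⟩
      let z : Fin n → K := y + fun l => y l ^ 2 ^ (t + 1)
      have hz : ∀ k, aeval z (assocPoly Q k) = 0 := by
        intro k
        rw [bmu_aeval_add Q hQ, hy, hF y hy, ih.2 y hy]
        simp
      have h1 := hB z hz k
      have h2 : (fun l => z l ^ 2) = (fun l => y l ^ 2) + fun l => y l ^ 2 ^ (t + 1 + 1) := by
        funext l
        simp only [z, Pi.add_apply]
        rw [add_pow_char, ← pow_mul, ← pow_succ]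
      have h3 : bmuP (bmuB Q k) (fun l => y l ^ 2 ^ (t + 1)) (fun l => y l ^ 2) = 0 := by
        have h := bmuP_frob (bmuB Q k) (fun l => y l ^ 2 ^ t) y 1
        rw [hsymm _ y, ih.1 y hy, zero_pow (by norm_num)] at h
        simpa [← pow_mul, ← pow_succ] using h
      have h4 : bmuP (bmuB Q k) (fun l => y l ^ 2 ^ (t + 1)) (fun l => y l ^ 2 ^ (t + 1 + 1)) = 0 := by
        have h := hB _ (hF y hy (t + 1)) k
        simpa only [← pow_mul, ← pow_succ] using h
      rw [h2, bmuP_add_left, bmuP_add_right, bmuP_add_right, hB y hy, h3, h4] at h1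
      simpa using h1
  have hij : ∀ y : Fin n → K, (∀ k, aeval y (assocPoly Q k) = 0) → ∀ k i r, i ≤ r →
      bmuP (bmuB Q k) (fun l => y l ^ 2 ^ i) (fun l => y l ^ 2 ^ r) = 0 := by
    intro y hy k i r hir
    obtain ⟨t, rfl⟩ := Nat.exists_eq_add_of_le hir
    have h := bmuP_frob (bmuB Q k) y (fun l => y l ^ 2 ^ t) i
    rw [(hC t).1 y hy, zero_pow (by positivity)] at h
    rw [← h]
    congr 1
    funext l
    rw [← pow_mul, ← pow_add, add_comm]
  have hS : ∀ y : Fin n → K, (∀ k, aeval y (assocPoly Q k) = 0) → ∀ k r,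
      aeval (fun l => ∑ i ∈ Finset.range r, y l ^ 2 ^ i) (assocPoly Q k) = 0 := by
    intro y hy k r
    induction r with
    | zero => rw [bmu_aeval]; simp
    | succ r ih =>
      have h1 : (fun l => ∑ i ∈ Finset.range (r + 1), y l ^ 2 ^ i) =
          (fun l => ∑ i ∈ Finset.range r, y l ^ 2 ^ i) + fun l => y l ^ 2 ^ r := by
        funext l
        rw [Finset.sum_range_succ, Pi.add_apply]
      have h2 : ∀ r', r' ≤ r → bmuP (bmuB Q k) (fun l => ∑ i ∈ Finset.range r', y l ^ 2 ^ i)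
          (fun l => y l ^ 2 ^ r) = 0 := by
        intro r'
        induction r' with
        | zero => intro _; simp [bmuP]
        | succ s ihs =>
          intro hs
          have h1 : (fun l => ∑ i ∈ Finset.range (s + 1), y l ^ 2 ^ i) =
              (fun l => ∑ i ∈ Finset.range s, y l ^ 2 ^ i) + fun l => y l ^ 2 ^ s := by
            funext l
            rw [Finset.sum_range_succ, Pi.add_apply]
          rw [h1, bmuP_add_left, ihs (by omega), hij y hy k s r (by omega), add_zero]
      rw [h1, bmu_aeval_add Q hQ, ih, hF y hy, h2 r le_rfl]
      simp
  have htr : ∀ y : Fin n → K, (∀ k, aeval y (assocPoly Q k) = 0) → ∀ l,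
      Algebra.trace (ZMod 2) K (y l) = 0 := by
    intro y hy l
    have hw : (fun l => Algebra.trace (ZMod 2) K (y l)) = 0 := by
      apply heff
      funext k
      rw [← bmu_aeval_eq Q hQ]
      apply (algebraMap (ZMod 2) K).injective
      rw [Pi.zero_apply, map_zero, ← hS y hy k (Module.finrank (ZMod 2) K)]
      have : (fun l => ∑ i ∈ Finset.range (Module.finrank (ZMod 2) K), y l ^ 2 ^ i) =
          fun l => algebraMap (ZMod 2) K (Algebra.trace (ZMod 2) K (y l)) := by
        funext l
        rw [FiniteField.algebraMap_trace_eq_sum_pow, Nat.card_zmod]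
      rw [this, ← aeval_algebraMap_apply]
      rfl
    exact congrFun hw l
  funext l
  by_contra hl
  have hnd := (traceForm_nondegenerate (ZMod 2) K).1 (x l) (fun a => by
    rw [Algebra.traceForm_apply, mul_comm]
    exact htr (fun l => a * x l) (fun k => by rw [bmu_aeval_smul, hx, mul_zero]) l)
  exact hl hnd

lemma bmu_rad {n : ℕ}
    (Q : (Fin n → ZMod 2) → (Fin n → ZMod 2)) (hQ : IsQuadraticMap Q)
    (hBC : ∀ k : Fin n, bockstein (assocPoly Q k) ∈ Ideal.span (Set.range (assocPoly Q)))
    (heff : ∀ w, Q w = 0 → w = 0) (i : Fin n) :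
    X i ∈ (Ideal.span (Set.range (assocPoly Q))).radical := by
  rw [Ideal.radical_eq_jacobson, Ideal.jacobson, Ideal.mem_sInf]
  rintro M ⟨hM, hmax⟩
  let _ : Field (MvPolynomial (Fin n) (ZMod 2) ⧸ M) := Ideal.Quotient.field M
  have hfin : Module.Finite (ZMod 2) (MvPolynomial (Fin n) (ZMod 2) ⧸ M) :=
    finite_of_finite_type_of_isJacobsonRing _ _
  have : Finite (MvPolynomial (Fin n) (ZMod 2) ⧸ M) := Module.finite_of_finite (ZMod 2)
  have hae : ∀ p, aeval (fun i => Ideal.Quotient.mkₐ (ZMod 2) M (X i)) p =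
      Ideal.Quotient.mkₐ (ZMod 2) M p := by
    intro p
    exact (DFunLike.congr_fun (aeval_unique (Ideal.Quotient.mkₐ (ZMod 2) M)) p).symm
  have hz := bmu_zero Q hQ hBC heff (fun i => Ideal.Quotient.mkₐ (ZMod 2) M (X i)) (fun k => by
    rw [hae]
    exact Ideal.Quotient.eq_zero_iff_mem.2 (hM (Ideal.subset_span ⟨k, rfl⟩)))
  exact Ideal.Quotient.eq_zero_iff_mem.1 (congrFun hz i)

lemma bmu_hom {n : ℕ} (Q : (Fin n → ZMod 2) → (Fin n → ZMod 2)) (k : Fin n) :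
    (assocPoly Q k).IsHomogeneous 2 := by
  refine IsHomogeneous.add (IsHomogeneous.sum _ _ _ fun i _ => ?_)
    (IsHomogeneous.sum _ _ _ fun i _ => IsHomogeneous.sum _ _ _ fun j _ => ?_)
  · simpa using (isHomogeneous_C (Fin n) (Q (Pi.single i 1) k)).mul (isHomogeneous_X_pow i 2)
  · split_ifs
    · simpa using ((isHomogeneous_C (Fin n) (qpolar Q (Pi.single i 1) (Pi.single j 1) k)).mul
        (isHomogeneous_X (ZMod 2) i)).mul (isHomogeneous_X (ZMod 2) j)
    · exact isHomogeneous_zero _ _ _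

/-- For a Bockstein closed, effective, Frattini quadratic map
`Q : F₂^n → F₂^n`, the binding matrix is unique: if `L₁` and `L₂` are matrices of
homogeneous linear forms with `β(q) = L₁q = L₂q`, then `L₁ = L₂`. -/
theorem binding_matrix_unique {n : ℕ}
    (Q : (Fin n → ZMod 2) → (Fin n → ZMod 2)) (hQ : IsQuadraticMap Q)
    (hBC : ∀ k : Fin n, bockstein (assocPoly Q k) ∈ Ideal.span (Set.range (assocPoly Q)))
    (heff : ∀ w, Q w = 0 → w = 0)
    (hfrat : Submodule.span (ZMod 2) (Set.range Q) = ⊤)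
    (L₁ L₂ : Matrix (Fin n) (Fin n) (MvPolynomial (Fin n) (ZMod 2)))
    (h₁hom : ∀ i j, (L₁ i j).IsHomogeneous 1) (h₂hom : ∀ i j, (L₂ i j).IsHomogeneous 1)
    (h₁ : L₁.mulVec (fun k => assocPoly Q k) = fun k => bockstein (assocPoly Q k))
    (h₂ : L₂.mulVec (fun k => assocPoly Q k) = fun k => bockstein (assocPoly Q k)) :
    L₁ = L₂ := by
  refine Matrix.ext fun i j => ?_
  have h := bmu_main (assocPoly Q) (bmu_hom Q) (bmu_rad Q hQ hBC heff)
    (fun j => L₁ i j - L₂ i j) (fun j => (h₁hom i j).sub (h₂hom i j)) (by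
      have h := congrFun (h₁.trans h₂.symm) i
      simp only [Matrix.mulVec, dotProduct] at h
      simp only [sub_mul, Finset.sum_sub_distrib, h, sub_self]) j
  exact sub_eq_zero.1 h
end

section
/- Let q₁,…,q_n ∈ F₂[x₁,…,x_n] be polynomials in bijective form, i.e., q_i = x_i² + Σ_{l<k} c^{(i)}_{lk} x_l x_k with c^{(i)}_{lk} ∈ F₂, and suppose q₁,…,q_n form a regular sequence in every order. Let L = Σ_i L_i x_i (with L_i ∈ M_n(F₂)) be an n×n matrix of homogeneous linear forms such that β(q) = Lq, where q is the column vector (q₁,…,q_n) and β is applied entrywise. Then β(L) + L² = Σ_i (L_i² + L_i) q_i. -/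
open MvPolynomial

/-- `f₁,…,f_r` is a regular sequence: each `f_k` is a nonzerodivisor in the quotient
ring modulo the ideal generated by its predecessors. -/
def IsRegularSeq {R : Type*} [CommRing R] {r : ℕ} (f : Fin r → R) : Prop :=
  ∀ k : Fin r, ∀ g : R,
    f k * g ∈ Ideal.span (f '' {j | j < k}) → g ∈ Ideal.span (f '' {j | j < k})

theorem bock_add {m : ℕ} (f g : MvPolynomial (Fin m) (ZMod 2)) :
    bockstein (f + g) = bockstein f + bockstein g := by
  simp [bockstein, mul_add, Finset.sum_add_distrib]

theorem bock_zero {m : ℕ} : bockstein (0 : MvPolynomial (Fin m) (ZMod 2)) = 0 := by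
  simp [bockstein]

theorem bock_sum {m : ℕ} {ι : Type*} (s : Finset ι) (f : ι → MvPolynomial (Fin m) (ZMod 2)) :
    bockstein (∑ i ∈ s, f i) = ∑ i ∈ s, bockstein (f i) := by
  classical
  induction s using Finset.induction_on with
  | empty => simp [bock_zero]
  | insert a s ha ih => rw [Finset.sum_insert ha, Finset.sum_insert ha, bock_add, ih]

theorem bock_mul {m : ℕ} (f g : MvPolynomial (Fin m) (ZMod 2)) :
    bockstein (f * g) = bockstein f * g + f * bockstein g := by
  simp only [bockstein, Finset.sum_mul, Finset.mul_sum, ← Finset.sum_add_distrib]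
  refine Finset.sum_congr rfl fun i _ => ?_
  rw [Derivation.leibniz]
  simp only [smul_eq_mul]
  ring

theorem bock_C {m : ℕ} (a : ZMod 2) : bockstein (C a : MvPolynomial (Fin m) (ZMod 2)) = 0 := by
  simp [bockstein]

theorem bock_X {m : ℕ} (i : Fin m) :
    bockstein (X i : MvPolynomial (Fin m) (ZMod 2)) = X i ^ 2 := by
  classical
  simp [bockstein, pderiv_X, Pi.single_apply]

theorem bock_bock {m : ℕ} (f : MvPolynomial (Fin m) (ZMod 2)) :
    bockstein (bockstein f) = 0 := by
  induction f using MvPolynomial.induction_on with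
  | C a => rw [bock_C, bock_zero]
  | add p q hp hq => rw [bock_add, bock_add, hp, hq, add_zero]
  | mul_X p i hp =>
    rw [bock_mul, bock_add, bock_mul, bock_mul, hp, bock_X, sq, bock_mul, bock_X, zero_mul,
      zero_add, mul_comm (X i ^ 2) (X i), CharTwo.add_self_eq_zero, mul_zero, add_zero,
      CharTwo.add_self_eq_zero]

/-- Degree-two part of a product with a quadratic form. -/
theorem homComp_mul {m : ℕ} (g q : MvPolynomial (Fin m) (ZMod 2)) (hq : q.IsHomogeneous 2) :
    homogeneousComponent 2 (g * q) = C (coeff 0 g) * q := by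
  classical
  ext d
  rw [coeff_homogeneousComponent, coeff_C_mul]
  split_ifs with h
  · rw [coeff_mul, Finset.sum_eq_single (0, d)]
    · rintro ⟨a, b⟩ hab hne
      rw [Finset.HasAntidiagonal.mem_antidiagonal] at hab
      simp only at hab ⊢
      by_cases hb : coeff b q = 0
      · rw [hb, mul_zero]
      · exfalso
        have h2 : b.degree = 2 := by
          by_contra h3
          exact hb (hq.coeff_eq_zero h3)
        rw [← hab, map_add, h2] at h
        have h0 : a.degree = 0 := by omega
        rw [Finsupp.degree_eq_zero_iff] at h0
        subst h0
        rw [zero_add] at hab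
        exact hne (by rw [hab])
    · intro h; simp at h
  · rw [hq.coeff_eq_zero h, mul_zero]

theorem quad_expand {n : ℕ} (q : Fin n → MvPolynomial (Fin n) (ZMod 2))
    (hq : ∀ i, (q i).IsHomogeneous 2)
    (he : ∀ i k, eval (Pi.single k 1) (q i) = if i = k then 1 else 0)
    (f : MvPolynomial (Fin n) (ZMod 2)) (hf : f.IsHomogeneous 2)
    (hmem : f ∈ Ideal.span (Set.range q)) :
    f = ∑ k, q k * C (eval (Pi.single k 1) f) := by
  obtain ⟨g, hg⟩ := Ideal.mem_span_range_iff_exists_fun.1 hmem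
  have h1 : f = ∑ k, C (coeff 0 (g k)) * q k := by
    have := homogeneousComponent_of_mem hf (m := 2)
    rw [if_pos rfl] at this
    rw [← this, ← hg, map_sum]
    exact Finset.sum_congr rfl fun k _ => homComp_mul _ _ (hq k)
  have h2 : ∀ k, eval (Pi.single k 1) f = coeff 0 (g k) := by
    intro k
    rw [h1]
    simp [he]
  simp only [h2]
  rw [h1]
  exact Finset.sum_congr rfl fun k _ => mul_comm _ _

theorem reg_mem {n : ℕ} (q : Fin n → MvPolynomial (Fin n) (ZMod 2))
    (hreg : ∀ σ : Equiv.Perm (Fin n), IsRegularSeq (fun k => q (σ k)))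
    (w : Fin n → MvPolynomial (Fin n) (ZMod 2)) (hw : ∑ j, w j * q j = 0) (j : Fin n) :
    w j ∈ Ideal.span (Set.range q) := by
  have hn : 0 < n := j.pos
  let t : Fin n := ⟨n - 1, by omega⟩
  have ht : ∀ k, k ≠ t → k < t := by
    intro k hk
    have h1 : (k : ℕ) ≠ n - 1 := fun h => hk (Fin.ext h)
    have := k.2
    show (k : ℕ) < n - 1
    omega
  let σ := Equiv.swap j t
  have hσ : σ t = j := Equiv.swap_apply_right _ _
  have key := hreg σ t (w j)
  have hin : q (σ t) * w j ∈ Ideal.span ((fun k => q (σ k)) '' {k | k < t}) := by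
    rw [hσ]
    rw [← Finset.add_sum_erase _ _ (Finset.mem_univ j)] at hw
    rw [mul_comm, eq_neg_of_add_eq_zero_left hw]
    refine neg_mem (sum_mem fun k hk => Ideal.mul_mem_left _ _ (Ideal.subset_span ?_))
    refine ⟨σ k, ht _ ?_, by simp [σ]⟩
    intro h
    exact Finset.ne_of_mem_erase hk (σ.injective (h.trans (by simp [σ])) )
  refine Ideal.span_mono ?_ (key hin)
  rintro _ ⟨k, -, rfl⟩
  exact ⟨σ k, rfl⟩

/-- If `q₁,…,q_n` are in bijective form, form a regular sequence in every
order, and `L = Σ_i L_i x_i` is a matrix of homogeneous linear forms with `β(q) = Lq`,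
then `β(L) + L² = Σ_i (L_i² + L_i) q_i`. -/
theorem bockstein_L_plus_L_sq {n : ℕ}
    (q : Fin n → MvPolynomial (Fin n) (ZMod 2))
    (c : Fin n → Fin n → Fin n → ZMod 2)
    (hbij : ∀ i, q i = X i ^ 2 +
      ∑ l : Fin n, ∑ k : Fin n, if l < k then C (c i l k) * X l * X k else 0)
    (hreg : ∀ σ : Equiv.Perm (Fin n), IsRegularSeq (fun k => q (σ k)))
    (Ls : Fin n → Matrix (Fin n) (Fin n) (ZMod 2))
    (L : Matrix (Fin n) (Fin n) (MvPolynomial (Fin n) (ZMod 2)))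
    (hL : L = ∑ i : Fin n, (X i : MvPolynomial (Fin n) (ZMod 2)) • (Ls i).map C)
    (hLq : L.mulVec q = fun k => bockstein (q k)) :
    L.map bockstein + L * L = ∑ i : Fin n, q i • (Ls i * Ls i + Ls i).map C := by
  have hhom : ∀ i, (q i).IsHomogeneous 2 := by
    intro i
    rw [hbij]
    refine (isHomogeneous_X_pow _ _).add (IsHomogeneous.sum _ _ _ fun l _ =>
      IsHomogeneous.sum _ _ _ fun k _ => ?_)
    split_ifs
    · exact ((isHomogeneous_C _ _).mul (isHomogeneous_X _ _)).mul (isHomogeneous_X _ _)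
    · exact isHomogeneous_zero _ _ _
  have he : ∀ i k, eval (Pi.single k 1) (q i) = if i = k then 1 else 0 := by
    intro i k
    rw [hbij, map_add, map_sum, Finset.sum_eq_zero, add_zero]
    · simp [Pi.single_apply]
    · intro l _
      rw [map_sum]
      refine Finset.sum_eq_zero fun m _ => ?_
      split_ifs with h
      · simp only [map_mul, eval_C, eval_X, Pi.single_apply]
        split_ifs with h1 h2
        · exact absurd h (by rw [h1, h2]; exact lt_irrefl _)
        all_goals simp
      · simp
  have hLe : ∀ i j, L i j = ∑ a, X a * C (Ls a i j) := by
    intro i j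
    rw [hL, Matrix.sum_apply]
    simp
  have hbL : ∀ i j, bockstein (L i j) = ∑ a, X a ^ 2 * C (Ls a i j) := by
    intro i j
    rw [hLe, bock_sum]
    refine Finset.sum_congr rfl fun a _ => ?_
    rw [bock_mul, bock_C, bock_X, mul_zero, add_zero]
  have hLhom : ∀ i j, (L i j).IsHomogeneous 1 := by
    intro i j
    rw [hLe]
    exact IsHomogeneous.sum _ _ _ fun a _ => (isHomogeneous_X _ _).mul (isHomogeneous_C _ _)
  have hM : ∀ i, ∑ j, (L.map bockstein + L * L) i j * q j = 0 := by
    intro i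
    have h1 : ∀ k, ∑ j, L k j * q j = bockstein (q k) := fun k => congrFun hLq k
    have h2 := bock_bock (q i)
    rw [← h1, bock_sum] at h2
    simp only [bock_mul, ← h1, Finset.sum_add_distrib] at h2
    simp only [Matrix.add_apply, Matrix.map_apply, add_mul, Finset.sum_add_distrib]
    rw [← h2]
    congr 1
    simp only [Matrix.mul_apply, Finset.sum_mul, Finset.mul_sum]
    rw [Finset.sum_comm]
    simp only [mul_assoc]
  ext1 i j
  have hMe : (L.map bockstein + L * L) i j = bockstein (L i j) + ∑ k, L i k * L k j := by
    simp [Matrix.mul_apply]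
  have hMhom : ((L.map bockstein + L * L) i j).IsHomogeneous 2 := by
    rw [hMe, hbL]
    refine IsHomogeneous.add (IsHomogeneous.sum _ _ _ fun a _ =>
      (isHomogeneous_X_pow _ _).mul (isHomogeneous_C _ _)) (IsHomogeneous.sum _ _ _ fun k _ =>
      (hLhom _ _).mul (hLhom _ _))
  have hevL : ∀ k i j, eval (Pi.single k 1) (L i j) = Ls k i j := by
    intro k i j
    rw [hLe]
    simp [Pi.single_apply]
  have hevM : ∀ k, eval (Pi.single k 1) ((L.map bockstein + L * L) i j)
      = (Ls k * Ls k + Ls k) i j := by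
    intro k
    rw [hMe, map_add, map_sum, hbL]
    simp only [map_mul, hevL]
    simp [Pi.single_apply, Matrix.mul_apply, add_comm]
  rw [quad_expand q hhom he _ hMhom (reg_mem q hreg _ (hM i) j), Matrix.sum_apply]
  simp only [hevM, Matrix.smul_apply, Matrix.map_apply, smul_eq_mul]
end

section
/- Let q₁, q₂ ∈ F₂[x₁,…,x_m] be homogeneous polynomials of degree 2 such that β(q₁) and β(q₂) both lie in the ideal (q₁, q₂). Then there exists an invertible matrix N ∈ GL₂(F₂) such that, writing (q₁', q₂')ᵀ = N·(q₁, q₂)ᵀ, there are homogeneous linear forms ℓ₁, ℓ₂ with β(q₁') = ℓ₁q₁' and β(q₂') = ℓ₂q₂'. In other words, every Bockstein closed quadratic map with two-dimensional codomain is diagonalizable. -/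
open MvPolynomial

namespace BocksteinAux

variable {m : ℕ}

lemma two_eq : (2 : MvPolynomial (Fin m) (ZMod 2)) = 0 := by
  have h : (2 : MvPolynomial (Fin m) (ZMod 2)) = C (2 : ZMod 2) :=
    (map_ofNat C 2).symm
  rw [h, show (2 : ZMod 2) = 0 from rfl, C_0]

lemma b_add (f g : MvPolynomial (Fin m) (ZMod 2)) :
    bockstein (f + g) = bockstein f + bockstein g := by
  simp [bockstein, mul_add, Finset.sum_add_distrib]

lemma b_mul (f g : MvPolynomial (Fin m) (ZMod 2)) :
    bockstein (f * g) = f * bockstein g + bockstein f * g := by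
  unfold bockstein
  rw [Finset.mul_sum, Finset.sum_mul, ← Finset.sum_add_distrib]
  refine Finset.sum_congr rfl fun i _ => ?_
  rw [Derivation.leibniz, smul_eq_mul, smul_eq_mul]
  ring

lemma b_C (a : ZMod 2) : bockstein (C a : MvPolynomial (Fin m) (ZMod 2)) = 0 := by
  simp [bockstein]

lemma b_zero : bockstein (0 : MvPolynomial (Fin m) (ZMod 2)) = 0 := by
  simp [bockstein]

lemma b_X (i : Fin m) : bockstein (X i : MvPolynomial (Fin m) (ZMod 2)) = X i ^ 2 := by
  classical
  rw [bockstein, Finset.sum_eq_single i]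
  · simp
  · intro j _ hj
    rw [pderiv_X_of_ne hj.symm, mul_zero]
  · simp

/-- The Bockstein squares to zero. -/
lemma b_b (f : MvPolynomial (Fin m) (ZMod 2)) : bockstein (bockstein f) = 0 := by
  induction f using MvPolynomial.induction_on with
  | C a => rw [b_C, b_zero]
  | add f g hf hg => rw [b_add, b_add, hf, hg, add_zero]
  | mul_X f i hf =>
    rw [b_mul, b_add, b_mul, b_mul, hf, b_X, pow_two, b_mul, b_X]
    linear_combination (f * X i ^ 3 + bockstein f * X i ^ 2) * two_eq (m := m)

/-- On linear forms the Bockstein is the Frobenius. -/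
lemma b_linear {l : MvPolynomial (Fin m) (ZMod 2)} (hl : l.IsHomogeneous 1) :
    bockstein l = l ^ 2 := by
  have h : l ∈ Submodule.span (ZMod 2) (Set.range (X : Fin m → MvPolynomial (Fin m) (ZMod 2))) := by
    rw [← homogeneousSubmodule_one_eq_span_X]
    exact hl
  induction h using Submodule.span_induction with
  | mem x hx =>
    obtain ⟨i, rfl⟩ := hx
    exact b_X i
  | zero => simp [b_zero]
  | add x y _ _ hx hy =>
    have hx' : x.IsHomogeneous 1 := by
      rw [← mem_homogeneousSubmodule, homogeneousSubmodule_one_eq_span_X]; assumption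
    have hy' : y.IsHomogeneous 1 := by
      rw [← mem_homogeneousSubmodule, homogeneousSubmodule_one_eq_span_X]; assumption
    rw [b_add, hx hx', hy hy']
    linear_combination (- x * y) * two_eq (m := m)
  | smul a x _ hx =>
    have hx' : x.IsHomogeneous 1 := by
      rw [← mem_homogeneousSubmodule, homogeneousSubmodule_one_eq_span_X]; assumption
    have ha : a * a = a := (by decide : ∀ a : ZMod 2, a * a = a) a
    rw [smul_eq_C_mul, b_mul, b_C, hx hx', mul_pow, pow_two (C a), ← C_mul, ha]
    ring

attribute [local instance] MvPolynomial.gradedAlgebra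

lemma comp_mul (u : MvPolynomial (Fin m) (ZMod 2)) {q : MvPolynomial (Fin m) (ZMod 2)}
    (hq : q.IsHomogeneous 2) :
    homogeneousComponent 3 (u * q) = homogeneousComponent 1 u * q := by
  have h := DirectSum.coe_decompose_mul_add_of_right_mem
    (homogeneousSubmodule (Fin m) (ZMod 2)) (a := u) (b := q) (i := 1) (j := 2) hq
  rw [← decomposition.decompose'_apply, ← decomposition.decompose'_apply]
  exact h

lemma b_hom {q : MvPolynomial (Fin m) (ZMod 2)} (hq : q.IsHomogeneous 2) :
    (bockstein q).IsHomogeneous 3 := by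
  refine IsHomogeneous.sum _ _ _ fun i _ => ?_
  exact (isHomogeneous_X_pow i 2).mul hq.pderiv

/-- Ideal membership can be realised with linear coefficients. -/
lemma exists_linear {p q₁ q₂ : MvPolynomial (Fin m) (ZMod 2)}
    (h₁ : q₁.IsHomogeneous 2) (h₂ : q₂.IsHomogeneous 2) (hp : p.IsHomogeneous 3)
    (h : p ∈ Ideal.span {q₁, q₂}) :
    ∃ a b : MvPolynomial (Fin m) (ZMod 2), a.IsHomogeneous 1 ∧ b.IsHomogeneous 1 ∧
      p = a * q₁ + b * q₂ := by
  obtain ⟨u, v, huv⟩ := Ideal.mem_span_pair.1 h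
  refine ⟨homogeneousComponent 1 u, homogeneousComponent 1 v,
    homogeneousComponent_isHomogeneous _ _, homogeneousComponent_isHomogeneous _ _, ?_⟩
  rw [← comp_mul u h₁, ← comp_mul v h₂, ← map_add, huv]
  exact (homogeneousComponent_eq_self hp).symm

/-- `q` is an eigenvector of the Bockstein with linear eigenvalue. -/
def Eig (q : MvPolynomial (Fin m) (ZMod 2)) : Prop :=
  ∃ l : MvPolynomial (Fin m) (ZMod 2), l.IsHomogeneous 1 ∧ bockstein q = l * q

lemma eig_zero : Eig (0 : MvPolynomial (Fin m) (ZMod 2)) :=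
  ⟨0, isHomogeneous_zero _ _ _, by simp [b_zero]⟩

/-- Two of the three nonzero combinations of `q₁, q₂` are eigenvectors. -/
lemma cases_eig (q₁ q₂ : MvPolynomial (Fin m) (ZMod 2))
    (h₁ : q₁.IsHomogeneous 2) (h₂ : q₂.IsHomogeneous 2)
    (hB₁ : bockstein q₁ ∈ Ideal.span {q₁, q₂})
    (hB₂ : bockstein q₂ ∈ Ideal.span {q₁, q₂}) :
    (Eig q₁ ∧ Eig q₂) ∨ (Eig q₁ ∧ Eig (q₁ + q₂)) ∨ (Eig (q₁ + q₂) ∧ Eig q₂) := by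
  obtain ⟨a, b, ha, hb, e₁⟩ := exists_linear h₁ h₂ (b_hom h₁) hB₁
  obtain ⟨c, d, hc, hd, e₂⟩ := exists_linear h₁ h₂ (b_hom h₂) hB₂
  have two := two_eq (m := m)
  by_cases z₁ : q₁ = 0
  · subst z₁
    exact Or.inl ⟨eig_zero, d, hd, by rw [e₂]; ring⟩
  by_cases z₂ : q₂ = 0
  · subst z₂
    exact Or.inl ⟨⟨a, ha, by rw [e₁]; ring⟩, eig_zero⟩
  have f₁ : b * (c * q₁ + (a + b + d) * q₂) = 0 := by
    have h := b_b q₁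
    rw [e₁, b_add, b_mul, b_mul, b_linear ha, b_linear hb, e₁, e₂] at h
    linear_combination h - (a ^ 2 * q₁) * two
  have f₂ : c * ((a + c + d) * q₁ + b * q₂) = 0 := by
    have h := b_b q₂
    rw [e₂, b_add, b_mul, b_mul, b_linear hc, b_linear hd, e₁, e₂] at h
    linear_combination h - (d ^ 2 * q₂) * two
  by_cases zb : b = 0
  · subst zb
    have E₁ : Eig q₁ := ⟨a, ha, by rw [e₁]; ring⟩
    by_cases zc : c = 0
    · subst zc
      exact Or.inl ⟨E₁, d, hd, by rw [e₂]; ring⟩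
    · have g : a + c + d = 0 := by simpa [zc, z₁] using f₂
      refine Or.inr (Or.inl ⟨E₁, d, hd, ?_⟩)
      rw [b_add, e₁, e₂]
      linear_combination q₁ * g - (d * q₁) * two
  by_cases zc : c = 0
  · subst zc
    have g : a + b + d = 0 := by simpa [zb, z₂] using f₁
    refine Or.inr (Or.inr ⟨⟨a, ha, ?_⟩, d, hd, by rw [e₂]; ring⟩)
    rw [b_add, e₁, e₂]
    linear_combination q₂ * g - (a * q₂) * two
  have g₁ := (mul_eq_zero.1 f₁).resolve_left zb
  have g₂ := (mul_eq_zero.1 f₂).resolve_left zc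
  have s : q₂ * ((a + d) * (a + b + c + d)) = 0 := by
    linear_combination (a + c + d) * g₁ - c * g₂
  have s' := (mul_eq_zero.1 s).resolve_left z₂
  rcases mul_eq_zero.1 s' with s | s
  · refine Or.inl ⟨⟨a + c, ha.add hc, ?_⟩, b + d, hb.add hd, ?_⟩
    · rw [e₁]
      linear_combination g₁ - q₂ * s - c * q₁ * two
    · rw [e₂]
      linear_combination g₁ - q₂ * s - b * q₂ * two
  · have e : c * (q₁ + q₂) = 0 := by
      linear_combination g₁ - q₂ * s + c * q₂ * two
    have e' := (mul_eq_zero.1 e).resolve_left zc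
    refine Or.inl ⟨⟨a + b, ha.add hb, ?_⟩, c + d, hc.add hd, ?_⟩
    · rw [e₁]
      linear_combination b * e' - b * q₁ * two
    · rw [e₂]
      linear_combination c * e' - c * q₂ * two

end BocksteinAux

/-- Every Bockstein closed pair of homogeneous quadratic polynomials
`(q₁, q₂)` over `F₂` is diagonalizable: after an invertible `F₂`-linear change
`(q₁', q₂')ᵀ = N (q₁, q₂)ᵀ`, each component satisfies `β(qᵢ') = ℓᵢ qᵢ'` for some
homogeneous linear form `ℓᵢ`. -/
theorem two_dimensional_bockstein_closed_diagonalizable {m : ℕ}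
    (q₁ q₂ : MvPolynomial (Fin m) (ZMod 2))
    (h₁ : q₁.IsHomogeneous 2) (h₂ : q₂.IsHomogeneous 2)
    (hB₁ : bockstein q₁ ∈ Ideal.span {q₁, q₂})
    (hB₂ : bockstein q₂ ∈ Ideal.span {q₁, q₂}) :
    ∃ N : Matrix (Fin 2) (Fin 2) (ZMod 2), IsUnit N ∧
      ∃ ℓ₁ ℓ₂ : MvPolynomial (Fin m) (ZMod 2), ℓ₁.IsHomogeneous 1 ∧ ℓ₂.IsHomogeneous 1 ∧
        bockstein (C (N 0 0) * q₁ + C (N 0 1) * q₂) =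
          ℓ₁ * (C (N 0 0) * q₁ + C (N 0 1) * q₂) ∧
        bockstein (C (N 1 0) * q₁ + C (N 1 1) * q₂) =
          ℓ₂ * (C (N 1 0) * q₁ + C (N 1 1) * q₂) := by
  rcases BocksteinAux.cases_eig q₁ q₂ h₁ h₂ hB₁ hB₂ with
    ⟨⟨l₁, hl₁, E₁⟩, l₂, hl₂, E₂⟩ | ⟨⟨l₁, hl₁, E₁⟩, l₂, hl₂, E₂⟩ | ⟨⟨l₁, hl₁, E₁⟩, l₂, hl₂, E₂⟩
  · exact ⟨1, isUnit_one, l₁, l₂, hl₁, hl₂, by simpa using E₁, by simpa using E₂⟩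
  · exact ⟨!![1, 0; 1, 1], (Matrix.isUnit_iff_isUnit_det _).2 (by simp [Matrix.det_fin_two]),
      l₁, l₂, hl₁, hl₂, by simpa using E₁, by simpa using E₂⟩
  · exact ⟨!![1, 1; 0, 1], (Matrix.isUnit_iff_isUnit_det _).2 (by simp [Matrix.det_fin_two]),
      l₁, l₂, hl₁, hl₂, by simpa using E₁, by simpa using E₂⟩
end

section
/- Let L be a finite-dimensional Lie algebra over F₂ equipped with a 2-restricted squaring sq : L → L which is effective. If x ∈ L satisfies sq(x) + x ∈ Z(L), where Z(L) is the center of L, then x ∈ Z(L). -/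
/-- Let `L` be a finite-dimensional Lie algebra over `F₂` with an
effective 2-restricted squaring `sq`. If `sq(x) + x` is central, then `x` is central. -/
theorem central_mod_sq_implies_central
    {L : Type*} [LieRing L] [LieAlgebra (ZMod 2) L] [Module.Finite (ZMod 2) L]
    (sq : L → L)
    (hsq1 : ∀ x y : L, sq (x + y) = sq x + sq y + ⁅x, y⁆)
    (hsq2 : ∀ x y : L, ⁅sq x, y⁆ = ⁅⁅x, y⁆, x⁆)
    (heff : ∀ x : L, sq x = x → x = 0)
    (x : L) (hx : sq x + x ∈ LieAlgebra.center (ZMod 2) L) :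
    x ∈ LieAlgebra.center (ZMod 2) L := by
  have h2 : ∀ a : L, a + a = 0 := fun a => by
    have h : (2 : ZMod 2) • a = 0 := by
      rw [show (2 : ZMod 2) = 0 from rfl, zero_smul]
    rwa [two_smul] at h
  have heq : ∀ a b : L, a + b = 0 → a = b := fun a b h =>
    add_right_cancel (h.trans (h2 b).symm)
  -- two elements with the same image under `sq + id`, one central, agree
  have key : ∀ a b : L, ⁅a, b⁆ = 0 → sq a + a = sq b + b → a = b := by
    intro a b hab h
    apply heq
    apply heff
    rw [hsq1, hab, add_zero]
    apply heq
    have h' : sq a + sq b + (a + b) = (sq a + a) + (sq b + b) := by abel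
    rw [h', h, h2]
  have hcen : ∀ z : L, z ∈ LieAlgebra.center (ZMod 2) L ↔ ∀ y : L, ⁅y, z⁆ = 0 := fun z =>
    LieModule.mem_maxTrivSubmodule (ZMod 2) L L z
  have hclosed : ∀ z : L, z ∈ LieAlgebra.center (ZMod 2) L →
      sq z + z ∈ LieAlgebra.center (ZMod 2) L := by
    intro z hz
    refine add_mem ((hcen _).2 fun y => ?_) hz
    rw [← lie_skew, hsq2, (hcen z).1 hz, neg_zero]
  have : Finite L := Module.finite_of_finite (ZMod 2)
  let f : LieAlgebra.center (ZMod 2) L → LieAlgebra.center (ZMod 2) L :=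
    fun z => ⟨sq z + z, hclosed z z.2⟩
  have hf : Function.Injective f := by
    intro a b h
    exact Subtype.ext (key a b ((hcen _).1 b.2 _) (congrArg Subtype.val h))
  have : Finite (LieAlgebra.center (ZMod 2) L) :=
    Finite.of_injective (fun z => (z : L)) Subtype.val_injective
  obtain ⟨z, hz⟩ := Finite.surjective_of_injective hf ⟨sq x + x, hx⟩
  rw [key x z ((hcen _).1 z.2 _) (congrArg Subtype.val hz).symm]
  exact z.2
end

section
/- Let L be a Lie algebra over F₂ equipped with a 2-restricted squaring sq : L → L which is Frattini. If x₀ ∈ L is such that the span of x₀ is a Lie ideal of L (i.e., for every y ∈ L, ⁅x₀, y⁆ lies in the F₂-span of x₀), then x₀ is central: ⁅x₀, y⁆ = 0 for all y ∈ L. -/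
/-- Let `L` be a Lie algebra over `F₂` with a Frattini 2-restricted
squaring `sq`. If the span of `x₀` is a Lie ideal of `L`, then `x₀` is central. -/
theorem one_dimensional_ideal_is_central
    {L : Type*} [LieRing L] [LieAlgebra (ZMod 2) L]
    (sq : L → L)
    (hsq1 : ∀ x y : L, sq (x + y) = sq x + sq y + ⁅x, y⁆)
    (hsq2 : ∀ x y : L, ⁅sq x, y⁆ = ⁅⁅x, y⁆, x⁆)
    (hfrat : Submodule.span (ZMod 2) {v : L | ∃ w : L, v = sq w + w} = ⊤)
    (x₀ : L) (hid : ∀ y : L, ⁅x₀, y⁆ ∈ Submodule.span (ZMod 2) {x₀}) :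
    ∀ y : L, ⁅x₀, y⁆ = 0 := by
  intro y
  have hy : y ∈ Submodule.span (ZMod 2) {v : L | ∃ w : L, v = sq w + w} := by
    rw [hfrat]; trivial
  induction hy using Submodule.span_induction with
  | mem v hv =>
    obtain ⟨w, rfl⟩ := hv
    have h1 : ⁅x₀, sq w⁆ = ⁅⁅x₀, w⁆, w⁆ := by
      rw [← lie_skew, hsq2, ← lie_skew x₀ w, neg_lie]
    obtain ⟨c, hc⟩ := Submodule.mem_span_singleton.1 (hid w)
    have h2 : x₀ + x₀ = 0 := by
      rw [← two_smul (ZMod 2) x₀, show (2 : ZMod 2) = 0 from rfl, zero_smul]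
    have h3 : c = 0 ∨ c = 1 := by
      exact (by decide : ∀ c : ZMod 2, c = 0 ∨ c = 1) c
    rw [lie_add, h1]
    rcases h3 with rfl | rfl
    · rw [← hc]; simp
    · rw [one_smul] at hc
      rw [← hc, ← hc, h2]
  | zero => simp
  | add a b _ _ ha hb => rw [lie_add, ha, hb, add_zero]
  | smul c a _ ha => rw [lie_smul, ha, smul_zero]
end
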